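/- arXiv:1811.01654 — 2 statements merged into one kernel-verified Lean document; each statement's English description precedes it below -/
import Mathlib

section
/- Let f : (A₊)^k → ℂ (k ≥ 1) be such that the sum Σ over all tuples (G₁,…,G_k) ∈ (A₊)^k of 2^{ω(G₁)+⋯+ω(G_k)} · |(μ_k ∗ f)(G₁,…,G_k)| / (|G₁|⋯|G_k|) is finite. Then for every (G₁,…,G_k) ∈ (A₊)^k the family ( C*_{H₁,…,H_k} · η*(G₁,H₁)⋯η*(G_k,H_k) ) indexed by (H₁,…,H_k) ∈ (A₊)^k is absolutely summable with sum f(G₁,…,G_k), where C*_{H₁,…,H_k} = Σ over M₁,…,M_k ∈ A₊ with (M₁,H₁)=1,…,(M_k,H_k)=1 of (μ_k ∗ f)(M₁H₁,…,M_kH_k) / (|M₁H₁|⋯|M_kH_k|) (this series also converges absolutely). -/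
/-!
Write `g_P(G,H)` for `|P^a|` if `P^a ∣ G` and `0` otherwise, where `P^a` is the exact power of `P`
in `H`; by orthogonality this is the complete sum of `E(G,P^a)`. Inclusion–exclusion over the
prime powers exactly dividing `H` gives `η*(G,H) = ∏_{P ∣ H} (g_P(G,H) - 1)` (`etaStar_eq_prod`).
This has two consequences. First, `|η*(G,H)| ≤ |(G,H)_*| ≤ |G|`, uniformly in `H`
(`norm_etaStar_le`). Second, the sum of `η*(G,H)` over the unitary divisors `H` of `Q` is
`∏_{P ∣ Q} g_P(G,Q)`, that is `|Q|` if `Q ∣ G` and `0` otherwise (`sum_etaStar`).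

By Möbius inversion `f(G)` is the sum of `(μ_k ∗ f)(Q)` over the `Q` with `Q_i ∣ G_i`
(`sum_muConv`). Inserting the second consequence turns this into a sum over all factorizations
`Q = M H` into coprime parts, and collecting the terms with a given `H` produces the asserted
expansion. The rearrangement is legitimate because `Q` has `2^(ω(Q₁)+⋯+ω(Q_k))` such
factorizations, so that by the first consequence the double family over `(M, H)` is dominated by
`|G₁|⋯|G_k|` times the series assumed to converge (`summable_coefTerm`).
-/

open Polynomial UniqueFactorizationMonoid

variable (p : ℕ) [Fact p.Prime] (F : Type) [Field F] [Fintype F] [DecidableEq F]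
  [Algebra (ZMod p) F]

/-- The absolute value `|G| = q ^ deg G` of a polynomial over `𝔽_q`. -/
def anorm (G : Polynomial F) : ℕ := Fintype.card F ^ G.natDegree

/-- `t_H(A')`: the coefficient of `T^(m-1)` in the remainder of `A'` upon division by `H`,
where `m = deg H`. -/
noncomputable def tmap (H A' : Polynomial F) : F := (A' % H).coeff (H.natDegree - 1)

/-- The additive character `E(G,H)(D) = exp(2πi · tr(t_H(G·D)) / p)`. -/
noncomputable def echar (G H D : Polynomial F) : ℂ :=
  Complex.exp (2 * Real.pi * Complex.I *
    ((Algebra.trace (ZMod p) F (tmap F H (G * D))).val : ℂ) / (p : ℂ))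

open scoped Classical in
/-- `ω(G)`: the number of distinct monic irreducible divisors of `G`. -/
noncomputable def omega (G : Polynomial F) : ℕ := (normalizedFactors G).toFinset.card

open scoped Classical in
/-- The Möbius function on `𝔽_q[T]`. -/
noncomputable def mu (G : Polynomial F) : ℤ :=
  if Squarefree G then (-1) ^ omega F G else 0

/-- The polynomial Ramanujan sum `η(G,H)`: the sum of `E(G,H)(D)` over a complete residue
system `D` modulo `H` with `(D,H) = 1`. -/
noncomputable def eta (G H : Polynomial F) : ℂ :=
  ∑' D : {D : Polynomial F // D.degree < H.degree ∧ IsCoprime D H}, echar p F G H D.1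

open scoped Classical in
/-- The unitary gcd `(G,H)_*`: the monic polynomial of highest degree dividing `G` and
unitarily dividing `H`. -/
noncomputable def ugcd (G H : Polynomial F) : Polynomial F :=
  ∏ P ∈ (normalizedFactors H).toFinset,
    if P ^ (normalizedFactors H).count P ∣ G then P ^ (normalizedFactors H).count P else 1

/-- `μ*(G) = (-1)^(ω(G))`. -/
noncomputable def muStar (G : Polynomial F) : ℤ := (-1) ^ omega F G

/-- The unitary polynomial Ramanujan sum `η*(G,H)`: the sum of `E(G,H)(D)` over a complete
residue system `D` modulo `H` with `(D,H)_* = 1`. -/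
noncomputable def etaStar (G H : Polynomial F) : ℂ :=
  ∑' D : {D : Polynomial F // D.degree < H.degree ∧ ugcd F D H = 1}, echar p F G H D.1

/-- The Dirichlet convolution of `μ_k` with `f` on `k`-tuples of monic polynomials:
`(μ_k ∗ f)(G₁,…,G_k) = Σ_{D_i E_i = G_i, D_i,E_i monic} μ(D₁)⋯μ(D_k) · f(E₁,…,E_k)`. -/
noncomputable def muConv {k : ℕ} (f : (Fin k → Polynomial F) → ℂ)
    (G : Fin k → Polynomial F) : ℂ :=
  ∑' DE : {DE : (Fin k → Polynomial F) × (Fin k → Polynomial F) //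
      (∀ i, (DE.1 i).Monic) ∧ (∀ i, (DE.2 i).Monic) ∧ ∀ i, DE.1 i * DE.2 i = G i},
    (∏ i, (mu F (DE.1.1 i) : ℂ)) * f DE.1.2

set_option linter.unusedSectionVars false

section
open scoped Classical

/-! ### Additive characters and orthogonality -/

/-- The additive character `a ↦ exp(2πi · tr(a) / p)` of `𝔽_q`. -/
noncomputable def psi : AddChar F ℂ :=
  (ZMod.stdAddChar (N := p)).compAddMonoidHom (Algebra.trace (ZMod p) F).toAddMonoidHom

lemma echar_eq_psi (G H D : F[X]) : echar p F G H D = psi p F (tmap F H (G * D)) := by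
  simp only [echar, psi, AddChar.compAddMonoidHom_apply, LinearMap.toAddMonoidHom_coe,
    ZMod.stdAddChar_apply, ZMod.toCircle_apply]

lemma exists_psi_ne_one : ∃ a : F, psi p F a ≠ 1 := by
  obtain ⟨a, ha⟩ := Algebra.trace_surjective (ZMod p) F 1
  refine ⟨a, fun h => ?_⟩
  simp only [psi, AddChar.compAddMonoidHom_apply, LinearMap.toAddMonoidHom_coe, ha] at h
  have h2 := ZMod.injective_stdAddChar (N := p) (h.trans (AddChar.map_zero_eq_one _).symm)
  exact one_ne_zero h2

lemma mul_mod_mul {U V : F[X]} (hU : U.Monic) (hV : V.Monic) (X : F[X]) :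
    (U * X) % (U * V) = U * (X % V) := by
  rw [← modByMonic_eq_mod _ (hU.mul hV), ← modByMonic_eq_mod _ hV]
  refine (div_modByMonic_unique (X /ₘ V) _ (hU.mul hV) ⟨?_, ?_⟩).2
  · conv_rhs => rw [← modByMonic_add_div X V]
    ring
  · rw [degree_mul, degree_mul]
    have h := degree_modByMonic_lt X hV
    have hU0 : U.degree ≠ ⊥ := by simpa [degree_eq_bot] using hU.ne_zero
    exact WithBot.add_lt_add_left hU0 h

/-- In terms of characters: `E(G,UV)(UD) = E(G,V)(D)`. -/
lemma tmap_mul {U V : F[X]} (hU : U.Monic) (hV : V.Monic) (X : F[X]) :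
    tmap F (U * V) (U * X) = tmap F V X := by
  unfold tmap
  rw [mul_mod_mul F hU hV, hU.natDegree_mul hV]
  rcases Nat.eq_zero_or_pos V.natDegree with h | h
  · rw [hV.natDegree_eq_zero.mp h]
    simp [EuclideanDomain.mod_one]
  · have h1 : (X % V).natDegree ≤ V.natDegree - 1 := by
      have := natDegree_mod_lt X (q := V) (by omega)
      omega
    rw [Nat.add_sub_assoc h, coeff_mul_add_eq_of_natDegree_le le_rfl h1, hU.coeff_natDegree,
      one_mul]

/-- `D ↦ E(G,V)(D)` as an additive character of the group of polynomials of degree `< n`. -/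
noncomputable def echarLT (G V : F[X]) (n : ℕ) : AddChar (degreeLT F n) ℂ where
  toFun D := psi p F (tmap F V (G * D.1))
  map_zero_eq_one' := by simp [tmap]
  map_add_eq_mul' a b := by
    rw [← AddChar.map_add_eq_mul]
    simp [tmap, mul_add, add_mod]

noncomputable instance degreeLT_fintype (n : ℕ) : Fintype (degreeLT F n) :=
  Fintype.ofEquiv _ (degreeLTEquiv F n).toEquiv.symm

lemma card_degreeLT (n : ℕ) : Fintype.card (degreeLT F n) = Fintype.card F ^ n := by
  rw [Fintype.card_congr (degreeLTEquiv F n).toEquiv]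
  simp

/-- Nondegeneracy of the pairing `(G, D) ↦ E(G,V)(D)`: if `R ≠ 0` is the residue of `G`, then
multiplying by `c T^(deg V - 1 - deg R)` moves the leading coefficient of `R` to the place
which `t_V` reads. -/
lemma exists_tmap_eq {V : F[X]} (hV : V.Monic) (G : F[X]) (hG : ¬ V ∣ G) {a : F}
    (ha : a ≠ 0) :
    ∃ D ∈ degreeLT F V.natDegree, tmap F V (G * D) = a := by
  have hR : G % V ≠ 0 := fun h => hG (EuclideanDomain.mod_eq_zero.mp h)
  have hV0 : V.natDegree ≠ 0 := fun h => hG (by rw [hV.natDegree_eq_zero.mp h]; exact one_dvd _)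
  have hlt := natDegree_mod_lt G hV0
  set R := G % V with hRdef
  refine ⟨C (a * R.leadingCoeff⁻¹) * X ^ (V.natDegree - 1 - R.natDegree), ?_, ?_⟩
  · rw [mem_degreeLT]
    refine (degree_C_mul_X_pow_le _ _).trans_lt ?_
    exact_mod_cast (by omega : V.natDegree - 1 - R.natDegree < V.natDegree)
  · set D := C (a * R.leadingCoeff⁻¹) * X ^ (V.natDegree - 1 - R.natDegree) with hD
    have ha0 : a * R.leadingCoeff⁻¹ ≠ 0 := mul_ne_zero ha (by simpa using hR)
    have hDdeg : D.natDegree = V.natDegree - 1 - R.natDegree :=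
      natDegree_C_mul_X_pow _ _ ha0
    have hD0 : D ≠ 0 := by simp [hD, ha, hR]
    have hnd : (R * D).natDegree = V.natDegree - 1 := by
      rw [natDegree_mul hR hD0, hDdeg]
      omega
    have h1 : (G * D) % V = R * D := by
      have h2 : (G * D) % V = (R * D) % V := by
        apply mod_eq_of_dvd_sub
        rw [← sub_mul]
        refine Dvd.dvd.mul_right ⟨G / V, ?_⟩ _
        rw [hRdef, sub_eq_iff_eq_add]
        exact (EuclideanDomain.div_add_mod G V).symm
      rw [h2, mod_eq_self_iff hV.ne_zero]
      refine degree_lt_degree ?_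
      omega
    unfold tmap
    rw [h1, ← hnd, coeff_natDegree, leadingCoeff_mul, hD, leadingCoeff_C_mul_X_pow]
    field_simp [leadingCoeff_ne_zero.mpr hR]

/-- Orthogonality of characters modulo `V`. -/
lemma sum_psi {V : F[X]} (hV : V.Monic) (G : F[X]) :
    ∑ D : degreeLT F V.natDegree, psi p F (tmap F V (G * D.1)) =
      if V ∣ G then (anorm F V : ℂ) else 0 := by
  split_ifs with h
  · have : ∀ D : degreeLT F V.natDegree, psi p F (tmap F V (G * D.1)) = 1 := fun D => by
      have : (G * D.1) % V = 0 := EuclideanDomain.mod_eq_zero.mpr (h.mul_right _)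
      simp [tmap, this]
    simp [this, card_degreeLT, anorm]
  · obtain ⟨a, ha⟩ := exists_psi_ne_one p F
    obtain ⟨D, hD, hDa⟩ := exists_tmap_eq F hV G h (a := a)
      (by rintro rfl; exact ha (AddChar.map_zero_eq_one _))
    refine AddChar.sum_eq_zero_of_ne_one (ψ := echarLT p F G V V.natDegree) fun h1 => ha ?_
    have := DFunLike.congr_fun h1 ⟨D, hD⟩
    simpa [echarLT, hDa] using this

/-- The sum of `E(G,UV)` over the multiples of `U` is a complete character sum modulo `V`. -/
lemma sum_psi_dvd {U V : F[X]} (hU : U.Monic) (hV : V.Monic) (G : F[X]) :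
    ∑ D : degreeLT F (U * V).natDegree,
      (if U ∣ D.1 then psi p F (tmap F (U * V) (G * D.1)) else 0) =
      if V ∣ G then (anorm F V : ℂ) else 0 := by
  classical
  rw [← sum_psi p F hV G, ← Finset.sum_filter]
  symm
  have hdeg : ∀ D : F[X], D ∈ degreeLT F V.natDegree ↔ U * D ∈ degreeLT F (U * V).natDegree := by
    intro D
    rw [mem_degreeLT, mem_degreeLT, hU.natDegree_mul hV, degree_mul,
      degree_eq_natDegree hU.ne_zero, Nat.cast_add]
    exact (WithBot.add_lt_add_iff_left (by simp)).symm
  refine Finset.sum_bij (fun D _ => ⟨U * D.1, (hdeg _).mp D.2⟩) ?_ ?_ ?_ ?_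
  · intro D _
    simp
  · intro D _ D' _ h
    exact Subtype.ext (mul_left_cancel₀ hU.ne_zero (congrArg Subtype.val h))
  · rintro ⟨D, hD⟩ h
    obtain ⟨D', rfl⟩ : U ∣ D := by simpa using h
    exact ⟨⟨D', (hdeg _).mpr hD⟩, Finset.mem_univ _, rfl⟩
  · intro D _
    rw [← tmap_mul F hU hV (G * D.1)]
    congr 2
    ring

/-! ### Unitary divisors and the product formula for `η*` -/

/-- The set of distinct monic irreducible divisors of `H`. -/
noncomputable def pf (H : F[X]) : Finset F[X] := (normalizedFactors H).toFinset

/-- The full power of `P` dividing `H`. -/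
noncomputable def ppow (H P : F[X]) : F[X] := P ^ (normalizedFactors H).count P

lemma mem_pf {H P : F[X]} (hH : H ≠ 0) : P ∈ pf F H ↔ Irreducible P ∧ P.Monic ∧ P ∣ H := by
  rw [pf, Multiset.mem_toFinset, mem_normalizedFactors_iff' hH]
  refine and_congr_right fun h => and_congr_left fun _ => ?_
  exact normalize_eq_self_iff_monic h.ne_zero

lemma pf_irr {H P : F[X]} (h : P ∈ pf F H) : Irreducible P :=
  irreducible_of_normalized_factor P (Multiset.mem_toFinset.mp h)

lemma pf_monic {H P : F[X]} (h : P ∈ pf F H) : P.Monic :=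
  (normalize_eq_self_iff_monic (pf_irr F h).ne_zero).mp
    (normalize_normalized_factor P (Multiset.mem_toFinset.mp h))

lemma count_ne_zero {H P : F[X]} (h : P ∈ pf F H) : (normalizedFactors H).count P ≠ 0 :=
  Multiset.count_ne_zero.mpr (Multiset.mem_toFinset.mp h)

lemma ppow_monic {H P : F[X]} (h : P ∈ pf F H) : (ppow F H P).Monic := (pf_monic F h).pow _

lemma ppow_not_unit {H P : F[X]} (h : P ∈ pf F H) : ¬ IsUnit (ppow F H P) := fun h1 =>
  (pf_irr F h).not_isUnit ((isUnit_pow_iff (count_ne_zero F h)).mp h1)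

lemma eq_of_dvd {P Q : F[X]} (hP : Irreducible P) (hPm : P.Monic) (hQ : Irreducible Q)
    (hQm : Q.Monic) (h : P ∣ Q) : P = Q :=
  eq_of_monic_of_associated hPm hQm (hP.associated_of_dvd hQ h)

lemma ppow_coprime {H P Q : F[X]} (hP : P ∈ pf F H) (hQ : Q ∈ pf F H) (h : P ≠ Q) :
    IsCoprime (ppow F H P) (ppow F H Q) := by
  refine IsCoprime.pow ((pf_irr F hP).coprime_iff_not_dvd.mpr fun hd => h ?_)
  exact eq_of_dvd F (pf_irr F hP) (pf_monic F hP) (pf_irr F hQ) (pf_monic F hQ) hd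

/-- The unitary divisor of `H` whose set of prime factors is `t`. -/
noncomputable def udiv (H : F[X]) (t : Finset F[X]) : F[X] := ∏ P ∈ t, ppow F H P

lemma udiv_monic {H : F[X]} {t : Finset F[X]} (ht : t ⊆ pf F H) : (udiv F H t).Monic :=
  monic_prod_of_monic _ _ fun _ hP => ppow_monic F (ht hP)

lemma udiv_pf {H : F[X]} (hH : H.Monic) : udiv F H (pf F H) = H := by
  have h := prod_normalizedFactors_eq hH.ne_zero
  rw [hH.normalize_eq_self, Finset.prod_multiset_count] at h
  exact h

lemma udiv_mul {H : F[X]} (hH : H.Monic) {t : Finset F[X]} (ht : t ⊆ pf F H) :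
    udiv F H t * udiv F H (pf F H \ t) = H := by
  conv_rhs => rw [← udiv_pf F hH]
  rw [mul_comm]
  exact Finset.prod_sdiff ht

lemma udiv_dvd {H : F[X]} {t : Finset F[X]} (ht : t ⊆ pf F H) (D : F[X]) :
    udiv F H t ∣ D ↔ ∀ P ∈ t, ppow F H P ∣ D := by
  refine ⟨fun h P hP => (Finset.dvd_prod_of_mem _ hP).trans h, fun h => ?_⟩
  exact Finset.prod_dvd_of_coprime
    (fun P hP Q hQ hPQ => ppow_coprime F (ht hP) (ht hQ) hPQ) h

lemma anorm_mul {U V : F[X]} (hU : U.Monic) (hV : V.Monic) :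
    anorm F (U * V) = anorm F U * anorm F V := by
  rw [anorm, hU.natDegree_mul hV, pow_add, anorm, anorm]

lemma anorm_prod {t : Finset F[X]} {u : F[X] → F[X]} (h : ∀ P ∈ t, (u P).Monic) :
    anorm F (∏ P ∈ t, u P) = ∏ P ∈ t, anorm F (u P) := by
  rw [anorm, natDegree_prod_of_monic _ _ h, ← Finset.prod_pow_eq_pow_sum]
  rfl

lemma anorm_pos (G : F[X]) : 0 < anorm F G := pow_pos Fintype.card_pos _

lemma ugcd_eq_one_iff (D H : F[X]) : ugcd F D H = 1 ↔ ∀ P ∈ pf F H, ¬ ppow F H P ∣ D := by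
  constructor
  · intro h P hP hd
    refine ppow_not_unit F hP (isUnit_of_dvd_one ?_)
    rw [← h, ugcd]
    refine dvd_trans ?_ (Finset.dvd_prod_of_mem _ hP)
    unfold ppow at hd ⊢
    rw [if_pos hd]
  · intro h
    exact Finset.prod_eq_one fun P hP => if_neg (h P hP)

lemma ugcd_dvd (G H : F[X]) : ugcd F G H ∣ G := by
  refine Finset.prod_dvd_of_coprime (fun P hP Q hQ hPQ => ?_) fun P _ => ?_
  · have := ppow_coprime F hP hQ hPQ
    simp only [Function.onFun]
    split_ifs
    · exact this
    · exact isCoprime_one_right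
    · exact isCoprime_one_left
    · exact isCoprime_one_left
  · split_ifs with h
    · exact h
    · exact one_dvd _

/-- The complete character sum modulo the full power of `P` in `H`, evaluated by orthogonality. -/
noncomputable def gval (G H P : F[X]) : ℂ :=
  if ppow F H P ∣ G then (anorm F (ppow F H P) : ℂ) else 0

lemma prod_gval {H : F[X]} {t : Finset F[X]} (ht : t ⊆ pf F H) (G : F[X]) :
    ∏ P ∈ t, gval F G H P = if udiv F H t ∣ G then (anorm F (udiv F H t) : ℂ) else 0 := by
  by_cases h : udiv F H t ∣ G
  · rw [if_pos h, udiv, anorm_prod F fun P hP => ppow_monic F (ht hP), Nat.cast_prod]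
    exact Finset.prod_congr rfl fun P hP => if_pos ((udiv_dvd F ht G).mp h P hP)
  · rw [if_neg h]
    rw [udiv_dvd F ht] at h
    push Not at h
    obtain ⟨P, hP, hPG⟩ := h
    exact Finset.prod_eq_zero hP (if_neg hPG)

lemma etaStar_eq_sum {H : F[X]} (hH : H.Monic) (G : F[X]) :
    etaStar p F G H = ∑ D : degreeLT F H.natDegree,
      if ugcd F D.1 H = 1 then psi p F (tmap F H (G * D.1)) else 0 := by
  rw [← Finset.sum_filter,
    Finset.sum_subtype (p := fun D : degreeLT F H.natDegree => ugcd F D.1 H = 1) _ (by simp),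
    ← tsum_fintype (L := SummationFilter.unconditional _)]
  have hmem : ∀ D : F[X], D ∈ degreeLT F H.natDegree ↔ D.degree < H.degree := fun D => by
    rw [mem_degreeLT, degree_eq_natDegree hH.ne_zero]
  let e : {D : F[X] // D.degree < H.degree ∧ ugcd F D H = 1} ≃
      {D : degreeLT F H.natDegree // ugcd F D.1 H = 1} :=
    { toFun := fun D => ⟨⟨D.1, (hmem _).mpr D.2.1⟩, D.2.2⟩
      invFun := fun D => ⟨D.1.1, (hmem _).mp D.1.2, D.2⟩
      left_inv := fun _ => rfl
      right_inv := fun _ => rfl }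
  rw [← e.tsum_eq]
  exact tsum_congr fun D => echar_eq_psi p F G H D.1

/-- Inclusion–exclusion over the prime powers exactly dividing `H`, with each inner sum evaluated
by orthogonality, makes `η*(G,H)` multiplicative in `H`: the factor at `P^a ∥ H` is `|P^a| - 1`
if `P^a ∣ G` and `-1` otherwise. -/
lemma etaStar_eq_prod {H : F[X]} (hH : H.Monic) (G : F[X]) :
    etaStar p F G H = ∏ P ∈ pf F H, (gval F G H P - 1) := by
  have hind : ∀ D : degreeLT F H.natDegree,
      (if ugcd F D.1 H = 1 then psi p F (tmap F H (G * D.1)) else 0) =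
      ∑ t ∈ (pf F H).powerset, (-1 : ℂ) ^ t.card *
        (if udiv F H t ∣ D.1 then psi p F (tmap F H (G * D.1)) else 0) := by
    intro D
    have h1 : (if ugcd F D.1 H = 1 then (1 : ℂ) else 0) =
        ∏ P ∈ pf F H, (-(if ppow F H P ∣ D.1 then (1 : ℂ) else 0) + 1) := by
      have : ∀ P, (-(if ppow F H P ∣ D.1 then (1 : ℂ) else 0) + 1) =
          if ¬ ppow F H P ∣ D.1 then 1 else 0 := fun P => by split_ifs <;> simp_all
      simp_rw [this, Finset.prod_boole, ugcd_eq_one_iff]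
    rw [← one_mul (psi p F _), ← zero_mul (psi p F (tmap F H (G * D.1))), ← ite_mul, h1,
      Finset.prod_add, Finset.sum_mul]
    refine Finset.sum_congr rfl fun t ht => ?_
    have ht := Finset.mem_powerset.mp ht
    rw [Finset.prod_const_one, mul_one, Finset.prod_neg, Finset.prod_boole]
    simp only [udiv_dvd F ht]
    split_ifs <;> simp
  rw [etaStar_eq_sum p F hH, Finset.sum_congr rfl fun D _ => hind D, Finset.sum_comm]
  simp_rw [sub_eq_neg_add, Finset.prod_add, Finset.prod_const, ← Finset.mul_sum]
  refine Finset.sum_congr rfl fun t ht => ?_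
  have ht := Finset.mem_powerset.mp ht
  congr 1
  rw [prod_gval F Finset.sdiff_subset, ← sum_psi_dvd p F (udiv_monic F ht)
    (udiv_monic F Finset.sdiff_subset) G, udiv_mul F hH ht]

/-- In the product formula the factor at `P` has absolute value at most `|P^a|` if `P^a ∣ G`, and
`1` otherwise, so the product is at most `|(G,H)_*|`. -/
lemma norm_etaStar_le {G H : F[X]} (hG : G ≠ 0) (hH : H.Monic) :
    ‖etaStar p F G H‖ ≤ anorm F G := by
  have h1 : anorm F (ugcd F G H) ≤ anorm F G :=
    Nat.pow_le_pow_right Fintype.card_pos (natDegree_le_of_dvd (ugcd_dvd F G H) hG)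
  refine le_trans ?_ (Nat.cast_le.mpr h1)
  rw [etaStar_eq_prod p F hH, norm_prod, ugcd, anorm_prod, Nat.cast_prod]
  · refine Finset.prod_le_prod (fun _ _ => norm_nonneg _) fun P _ => ?_
    rw [gval]
    change _ ≤ ((anorm F (if ppow F H P ∣ G then ppow F H P else 1) : ℕ) : ℝ)
    split_ifs
    · have := anorm_pos F (ppow F H P)
      rw [← Nat.cast_one, ← Nat.cast_sub this, Complex.norm_natCast]
      exact Nat.cast_le.mpr (Nat.sub_le _ _)
    · simp [anorm]
  · intro P hP
    split_ifs
    · exact ppow_monic F hP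
    · exact monic_one

/-! ### Sums over unitary divisors -/

lemma pf_mul {M H : F[X]} (hM : M.Monic) (hH : H.Monic) : pf F (M * H) = pf F M ∪ pf F H := by
  rw [pf, normalizedFactors_mul hM.ne_zero hH.ne_zero, Multiset.toFinset_add]
  rfl

lemma pf_disjoint {M H : F[X]} (hM : M.Monic) (hH : H.Monic) (h : IsCoprime M H) :
    Disjoint (pf F M) (pf F H) := by
  refine Finset.disjoint_left.mpr fun P hP hP' => (pf_irr F hP).not_isUnit ?_
  exact h.isUnit_of_dvd' ((mem_pf F hM.ne_zero).mp hP).2.2 ((mem_pf F hH.ne_zero).mp hP').2.2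

lemma ppow_mul_right {M H P : F[X]} (hM : M.Monic) (hH : H.Monic) (h : IsCoprime M H)
    (hP : P ∈ pf F H) : ppow F (M * H) P = ppow F H P := by
  have h1 : P ∉ normalizedFactors M := fun h1 =>
    Finset.disjoint_left.mp (pf_disjoint F hM hH h) (Multiset.mem_toFinset.mpr h1) hP
  rw [ppow, ppow, normalizedFactors_mul hM.ne_zero hH.ne_zero, Multiset.count_add,
    Multiset.count_eq_zero_of_notMem h1, zero_add]

lemma udiv_mul_right {M H : F[X]} (hM : M.Monic) (hH : H.Monic) (h : IsCoprime M H) :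
    udiv F (M * H) (pf F H) = H := by
  conv_rhs => rw [← udiv_pf F hH]
  exact Finset.prod_congr rfl fun P hP => ppow_mul_right F hM hH h hP

lemma udiv_coprime {Q : F[X]} {t : Finset F[X]} (ht : t ⊆ pf F Q) :
    IsCoprime (udiv F Q (pf F Q \ t)) (udiv F Q t) := by
  refine IsCoprime.prod_left fun P hP => IsCoprime.prod_right fun R hR => ?_
  obtain ⟨hP, hPt⟩ := Finset.mem_sdiff.mp hP
  exact ppow_coprime F hP (ht hR) fun h => hPt (h ▸ hR)

lemma pf_udiv {Q : F[X]} {t : Finset F[X]} (ht : t ⊆ pf F Q) : pf F (udiv F Q t) = t := by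
  ext P
  rw [mem_pf F (udiv_monic F ht).ne_zero]
  constructor
  · rintro ⟨hirr, hm, hd⟩
    obtain ⟨R, hR, hPR⟩ := (hirr.prime.dvd_finsetProd_iff _).mp hd
    rw [eq_of_dvd F hirr hm (pf_irr F (ht hR)) (pf_monic F (ht hR))
      (hirr.prime.dvd_of_dvd_pow hPR)]
    exact hR
  · intro hP
    refine ⟨pf_irr F (ht hP), pf_monic F (ht hP), ?_⟩
    exact (dvd_pow_self P (count_ne_zero F (ht hP))).trans (Finset.dvd_prod_of_mem _ hP)

/-- The factorizations `Q = M * H` into monic coprime factors, as pairs `(M, H)`; these are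
indexed by the sets `t` of prime factors of `H`. -/
noncomputable def unitaryPairs (Q : F[X]) : Finset (F[X] × F[X]) :=
  (pf F Q).powerset.image fun t => (udiv F Q (pf F Q \ t), udiv F Q t)

lemma mem_unitaryPairs {Q : F[X]} (hQ : Q.Monic) (x : F[X] × F[X]) :
    x ∈ unitaryPairs F Q ↔ x.1.Monic ∧ x.2.Monic ∧ IsCoprime x.1 x.2 ∧ x.1 * x.2 = Q := by
  simp only [unitaryPairs, Finset.mem_image, Finset.mem_powerset]
  constructor
  · rintro ⟨t, ht, rfl⟩
    exact ⟨udiv_monic F Finset.sdiff_subset, udiv_monic F ht, udiv_coprime F ht,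
      by rw [mul_comm, udiv_mul F hQ ht]⟩
  · obtain ⟨M, H⟩ := x
    rintro ⟨hM, hH, hc, rfl⟩
    dsimp only at *
    refine ⟨pf F H, by rw [pf_mul F hM hH]; exact Finset.subset_union_right, ?_⟩
    have h1 : pf F (M * H) \ pf F H = pf F M := by
      rw [pf_mul F hM hH, Finset.union_sdiff_right,
        Finset.sdiff_eq_self_of_disjoint (pf_disjoint F hM hH hc)]
    have h2 : udiv F (M * H) (pf F M) = M := by
      rw [mul_comm M H]
      exact udiv_mul_right F hH hM hc.symm
    rw [h1, h2, udiv_mul_right F hM hH hc]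

lemma unitaryPairs_injOn (Q : F[X]) :
    Set.InjOn (fun t => (udiv F Q (pf F Q \ t), udiv F Q t)) ((pf F Q).powerset : Set _) := by
  intro t ht s hs h
  have ht := Finset.mem_powerset.mp (Finset.mem_coe.mp ht)
  have hs := Finset.mem_powerset.mp (Finset.mem_coe.mp hs)
  rw [← pf_udiv F ht, ← pf_udiv F hs]
  exact congrArg (pf F) (congrArg Prod.snd h)

lemma card_unitaryPairs (Q : F[X]) : (unitaryPairs F Q).card = 2 ^ omega F Q := by
  rw [unitaryPairs, Finset.card_image_of_injOn (unitaryPairs_injOn F Q), Finset.card_powerset]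
  rfl

/-- Since `η*(G,·)` is multiplicative, the sum over unitary divisors is an Euler product whose
factors are the complete sums modulo prime powers. -/
lemma sum_etaStar {Q : F[X]} (hQ : Q.Monic) (G : F[X]) :
    ∑ x ∈ unitaryPairs F Q, etaStar p F G x.2 = if Q ∣ G then (anorm F Q : ℂ) else 0 := by
  rw [unitaryPairs, Finset.sum_image (unitaryPairs_injOn F Q)]
  have h : ∀ t ∈ (pf F Q).powerset,
      etaStar p F G (udiv F Q t) = ∏ P ∈ t, (gval F G Q P - 1) := by
    intro t ht
    have ht := Finset.mem_powerset.mp ht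
    rw [etaStar_eq_prod p F (udiv_monic F ht), pf_udiv F ht]
    refine Finset.prod_congr rfl fun P hP => ?_
    have := ppow_mul_right F (udiv_monic F Finset.sdiff_subset) (udiv_monic F ht)
      (udiv_coprime F ht) ((pf_udiv F ht).symm ▸ hP)
    rw [mul_comm, udiv_mul F hQ ht] at this
    rw [gval, gval, this]
  rw [Finset.sum_congr rfl h, ← Finset.prod_one_add]
  simp only [add_sub_cancel]
  rw [prod_gval F subset_rfl, udiv_pf F hQ]

/-! ### Möbius inversion -/

/-- The finite set of monic divisors of `N` when `N ≠ 0`; for `N = 0` only the monic divisors of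
degree `0`. -/
noncomputable def mdiv (N : F[X]) : Finset F[X] :=
  ((Finset.univ : Finset (degreeLT F (N.natDegree + 1))).map (Function.Embedding.subtype _)).filter
    fun D => D.Monic ∧ D ∣ N

lemma mem_mdiv {N D : F[X]} (hN : N ≠ 0) : D ∈ mdiv F N ↔ D.Monic ∧ D ∣ N := by
  rw [mdiv, Finset.mem_filter, and_iff_right_iff_imp]
  rintro ⟨-, hd⟩
  have : D ∈ degreeLT F (N.natDegree + 1) := by
    rw [mem_degreeLT]
    refine (degree_le_of_dvd hd hN).trans_lt ?_
    rw [degree_eq_natDegree hN]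
    exact_mod_cast Nat.lt_succ_self _
  simpa using this

lemma normalizedFactors_prod_pf {N : F[X]} {t : Finset F[X]} (ht : t ⊆ pf F N) :
    normalizedFactors (∏ P ∈ t, P) = t.val := by
  rw [show ∏ P ∈ t, P = t.val.prod from (Finset.prod_val t).symm,
    normalizedFactors_prod_eq _ fun P hP => pf_irr F (ht hP)]
  conv_rhs => rw [← Multiset.map_id t.val]
  exact Multiset.map_congr rfl fun P hP => (pf_monic F (ht hP)).normalize_eq_self

/-- Only the squarefree divisors contribute, and these correspond to the subsets of the set of
prime factors of `N`. -/
lemma sum_mu {N : F[X]} (hN : N.Monic) :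
    ∑ D ∈ mdiv F N, (mu F D : ℂ) = if N = 1 then 1 else 0 := by
  have hmon : ∀ t ∈ (pf F N).powerset, (∏ P ∈ t, P).Monic := fun t ht =>
    monic_prod_of_monic _ _ fun P hP => pf_monic F (Finset.mem_powerset.mp ht hP)
  have hnf : ∀ t ∈ (pf F N).powerset, normalizedFactors (∏ P ∈ t, P) = t.val := fun t ht =>
    normalizedFactors_prod_pf F (Finset.mem_powerset.mp ht)
  have h1 : (mdiv F N).filter Squarefree = (pf F N).powerset.image fun t => ∏ P ∈ t, P := by
    ext D
    simp only [Finset.mem_filter, mem_mdiv F hN.ne_zero, Finset.mem_image]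
    constructor
    · rintro ⟨⟨hm, hd⟩, hs⟩
      have hnd := (squarefree_iff_nodup_normalizedFactors hm.ne_zero).mp hs
      refine ⟨pf F D, Finset.mem_powerset.mpr fun P hP => ?_, ?_⟩
      · obtain ⟨h1, h2, h3⟩ := (mem_pf F hm.ne_zero).mp hP
        exact (mem_pf F hN.ne_zero).mpr ⟨h1, h2, h3.trans hd⟩
      · rw [show ∏ P ∈ pf F D, P = (pf F D).val.prod from (Finset.prod_val _).symm, pf,
          Multiset.toFinset_val, hnd.dedup, prod_normalizedFactors_eq hm.ne_zero,
          hm.normalize_eq_self]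
    · rintro ⟨t, ht, rfl⟩
      refine ⟨⟨hmon t ht, ?_⟩, ?_⟩
      · rw [dvd_iff_normalizedFactors_le_normalizedFactors (hmon t ht).ne_zero hN.ne_zero,
          hnf t ht]
        exact (Multiset.le_iff_subset t.nodup).mpr fun P hP =>
          Multiset.mem_toFinset.mp (Finset.mem_powerset.mp ht hP)
      · rw [squarefree_iff_nodup_normalizedFactors (hmon t ht).ne_zero, hnf t ht]
        exact t.nodup
  have h2 : ∀ D ∈ mdiv F N, (mu F D : ℂ) ≠ 0 → Squarefree D := by
    intro D _ h
    by_contra hs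
    exact h (by simp [mu, hs])
  rw [← Finset.sum_filter_of_ne h2, h1, Finset.sum_image]
  · have h3 : ∀ t ∈ (pf F N).powerset, ((mu F (∏ P ∈ t, P) : ℤ) : ℂ) = ((-1) ^ t.card : ℤ) := by
      intro t ht
      have hs : Squarefree (∏ P ∈ t, P) := by
        rw [squarefree_iff_nodup_normalizedFactors (hmon t ht).ne_zero, hnf t ht]
        exact t.nodup
      rw [mu, if_pos hs, omega, hnf t ht, Finset.val_toFinset]
    rw [Finset.sum_congr rfl h3, ← Int.cast_sum, Finset.sum_powerset_neg_one_pow_card]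
    have h4 : pf F N = ∅ ↔ N = 1 := by
      constructor
      · intro h
        rw [← udiv_pf F hN, h]
        rfl
      · rintro rfl
        simp [pf]
    simp only [h4]
    split_ifs <;> simp
  · intro t ht s hs h
    have := congrArg normalizedFactors h
    dsimp only at this
    rw [hnf t ht, hnf s hs] at this
    exact Finset.val_inj.mp this

/-- The kernel of convolution with `μ`: `μ(Q/E)` if `E ∣ Q`, and `0` otherwise. -/
noncomputable def kap (E Q : F[X]) : ℂ := if E ∣ Q then (mu F (Q / E) : ℂ) else 0

/-- Writing `Q = E D`, this is the sum of `μ` over the divisors `D` of `G/E`. -/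
lemma sum_kap {G E : F[X]} (hG : G.Monic) (hE : E ∈ mdiv F G) :
    ∑ Q ∈ mdiv F G, kap F E Q = if E = G then 1 else 0 := by
  obtain ⟨hEm, N, rfl⟩ := (mem_mdiv F hG.ne_zero).mp hE
  have hN : N.Monic := hEm.of_mul_monic_left hG
  have h1 : (E = E * N) ↔ N = 1 := by
    rw [eq_comm, mul_eq_left₀ hEm.ne_zero]
  simp only [h1, ← sum_mu F hN, kap]
  rw [← Finset.sum_filter]
  symm
  refine Finset.sum_bij (fun D _ => E * D) ?_ ?_ ?_ ?_
  · intro D hD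
    obtain ⟨hDm, hDN⟩ := (mem_mdiv F hN.ne_zero).mp hD
    simp only [Finset.mem_filter, mem_mdiv F hG.ne_zero]
    exact ⟨⟨hEm.mul hDm, mul_dvd_mul_left _ hDN⟩, dvd_mul_right _ _⟩
  · intro D _ D' _ h
    exact mul_left_cancel₀ hEm.ne_zero h
  · intro Q hQ
    simp only [Finset.mem_filter, mem_mdiv F hG.ne_zero] at hQ
    obtain ⟨⟨hQm, hQd⟩, D, rfl⟩ := hQ
    exact ⟨D, (mem_mdiv F hN.ne_zero).mpr ⟨hEm.of_mul_monic_left hQm,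
      (mul_dvd_mul_iff_left hEm.ne_zero).mp hQd⟩, rfl⟩
  · intro D _
    rw [mul_div_cancel_left₀ _ hEm.ne_zero]

lemma muConv_eq_sum {k : ℕ} (f : (Fin k → F[X]) → ℂ) {Q : Fin k → F[X]}
    (hQ : ∀ i, (Q i).Monic) :
    muConv F f Q = ∑ E ∈ Fintype.piFinset fun i => mdiv F (Q i),
      (∏ i, kap F (E i) (Q i)) * f E := by
  have hmem : ∀ E : Fin k → F[X], E ∈ (Fintype.piFinset fun i => mdiv F (Q i)) ↔
      ∀ i, (E i).Monic ∧ E i ∣ Q i := fun E => by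
    simp only [Fintype.mem_piFinset, mem_mdiv F (hQ _).ne_zero]
  have hdiv : ∀ i (E : F[X]), E ∣ Q i → Q i / E * E = Q i := fun i E hE => by
    rw [mul_comm]
    exact EuclideanDomain.mul_div_cancel' (ne_zero_of_dvd_ne_zero (hQ i).ne_zero hE) hE
  let e : {DE : (Fin k → F[X]) × (Fin k → F[X]) //
      (∀ i, (DE.1 i).Monic) ∧ (∀ i, (DE.2 i).Monic) ∧ ∀ i, DE.1 i * DE.2 i = Q i} ≃
      (Fintype.piFinset fun i => mdiv F (Q i)) :=
    { toFun := fun DE => ⟨DE.1.2, (hmem _).mpr fun i =>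
        ⟨DE.2.2.1 i, Dvd.intro_left _ (DE.2.2.2 i)⟩⟩
      invFun := fun E => ⟨(fun i => Q i / E.1 i, E.1),
        fun i => (((hmem _).mp E.2 i).1).of_mul_monic_right
          ((hdiv i _ ((hmem _).mp E.2 i).2).symm ▸ hQ i),
        fun i => ((hmem _).mp E.2 i).1, fun i => hdiv i _ ((hmem _).mp E.2 i).2⟩
      left_inv := fun ⟨⟨D, E⟩, h1, h2, h3⟩ => by
        refine Subtype.ext (Prod.ext (funext fun i => ?_) rfl)
        dsimp only at *
        rw [← h3 i, mul_div_cancel_right₀ _ (h2 i).ne_zero]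
      right_inv := fun _ => rfl }
  rw [muConv, ← e.symm.tsum_eq, tsum_fintype,
    ← Finset.sum_coe_sort _ fun E : Fin k → F[X] => (∏ i, kap F (E i) (Q i)) * f E]
  refine Finset.sum_congr rfl fun E _ => ?_
  congr 1
  refine Finset.prod_congr rfl fun i _ => ?_
  rw [kap, if_pos ((hmem _).mp E.2 i).2]
  rfl

/-- Möbius inversion in `k` variables. -/
lemma sum_muConv {k : ℕ} (f : (Fin k → F[X]) → ℂ) {G : Fin k → F[X]}
    (hG : ∀ i, (G i).Monic) :
    ∑ Q ∈ Fintype.piFinset (fun i => mdiv F (G i)), muConv F f Q = f G := by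
  have hmem : ∀ E : Fin k → F[X], E ∈ (Fintype.piFinset fun i => mdiv F (G i)) ↔
      ∀ i, (E i).Monic ∧ E i ∣ G i := fun E => by
    simp only [Fintype.mem_piFinset, mem_mdiv F (hG _).ne_zero]
  have h1 : ∀ Q ∈ Fintype.piFinset (fun i => mdiv F (G i)), muConv F f Q =
      ∑ E ∈ Fintype.piFinset fun i => mdiv F (G i), (∏ i, kap F (E i) (Q i)) * f E := by
    intro Q hQ
    have hQ' := (hmem Q).mp hQ
    rw [muConv_eq_sum F f fun i => (hQ' i).1]
    refine Finset.sum_subset (fun E hE => (hmem E).mpr fun i => ?_) fun E hE hE' => ?_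
    · have := (mem_mdiv F (hQ' i).1.ne_zero).mp (Fintype.mem_piFinset.mp hE i)
      exact ⟨this.1, this.2.trans (hQ' i).2⟩
    · rw [Fintype.mem_piFinset] at hE'
      push Not at hE'
      obtain ⟨i, hi⟩ := hE'
      rw [mem_mdiv F (hQ' i).1.ne_zero] at hi
      rw [Finset.prod_eq_zero (Finset.mem_univ i), zero_mul]
      exact if_neg fun hd => hi ⟨((hmem E).mp hE i).1, hd⟩
  rw [Finset.sum_congr rfl h1, Finset.sum_comm]
  simp_rw [← Finset.sum_mul]
  have h2 : ∀ E ∈ Fintype.piFinset (fun i => mdiv F (G i)),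
      (∑ Q ∈ Fintype.piFinset (fun i => mdiv F (G i)), ∏ i, kap F (E i) (Q i)) * f E =
      if E = G then f G else 0 := by
    intro E hE
    rw [← Finset.prod_univ_sum]
    have : ∀ i, ∑ Q ∈ mdiv F (G i), kap F (E i) Q = if E i = G i then 1 else 0 := fun i =>
      sum_kap F (hG i) (Fintype.mem_piFinset.mp hE i)
    simp_rw [this, Finset.prod_boole]
    by_cases h : E = G
    · subst h
      simp
    · rw [if_neg h, if_neg, zero_mul]
      exact fun h' => h (funext fun i => h' i (Finset.mem_univ i))
  rw [Finset.sum_congr rfl h2, Finset.sum_ite_eq', if_pos]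
  exact (hmem G).mpr fun i => ⟨hG i, dvd_rfl⟩

/-! ### Rearrangement of the double series -/

/-- Pairs of tuples with `(M_i, H_i) = 1`, grouped either by the product tuple `Q = M H` or by
`H`. -/
noncomputable def regroup (k : ℕ) :
    (Σ Q : {Q : Fin k → F[X] // ∀ i, (Q i).Monic},
      (Fintype.piFinset fun i => unitaryPairs F (Q.1 i))) ≃
    (Σ H : {H : Fin k → F[X] // ∀ i, (H i).Monic},
      {M : Fin k → F[X] // (∀ i, (M i).Monic) ∧ ∀ i, IsCoprime (M i) (H.1 i)}) where
  toFun s :=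
    have h := fun i => (mem_unitaryPairs F (s.1.2 i) _).mp (Fintype.mem_piFinset.mp s.2.2 i)
    ⟨⟨fun i => (s.2.1 i).2, fun i => (h i).2.1⟩,
      ⟨fun i => (s.2.1 i).1, fun i => (h i).1, fun i => (h i).2.2.1⟩⟩
  invFun s := ⟨⟨fun i => s.2.1 i * s.1.1 i, fun i => (s.2.2.1 i).mul (s.1.2 i)⟩,
    ⟨fun i => (s.2.1 i, s.1.1 i), Fintype.mem_piFinset.mpr fun i =>
      (mem_unitaryPairs F ((s.2.2.1 i).mul (s.1.2 i)) _).mpr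
        ⟨s.2.2.1 i, s.1.2 i, s.2.2.2 i, rfl⟩⟩⟩
  left_inv := by
    rintro ⟨⟨Q, hQ⟩, ⟨x, hx⟩⟩
    have h : Q = fun i => (x i).1 * (x i).2 := funext fun i =>
      ((mem_unitaryPairs F (hQ i) _).mp (Fintype.mem_piFinset.mp hx i)).2.2.2.symm
    subst h
    rfl
  right_inv _ := rfl

lemma regroup_mul {k : ℕ} (s : Σ Q : {Q : Fin k → F[X] // ∀ i, (Q i).Monic},
      (Fintype.piFinset fun i => unitaryPairs F (Q.1 i))) :
    (fun i => (regroup F k s).2.1 i * (regroup F k s).1.1 i) = s.1.1 := funext fun i =>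
  ((mem_unitaryPairs F (s.1.2 i) _).mp (Fintype.mem_piFinset.mp s.2.2 i)).2.2.2

/-- The summand `(μ_k ∗ f)(Q) / (|Q₁|⋯|Q_k|)` of the coefficient series. -/
noncomputable def coefTerm {k : ℕ} (f : (Fin k → F[X]) → ℂ) (Q : Fin k → F[X]) : ℂ :=
  muConv F f Q / ∏ i, (anorm F (Q i) : ℂ)

/-- A tuple `Q` has `2^(ω(Q₁)+⋯+ω(Q_k))` coprime factorizations `Q = M H`: this is the weight in
the summability hypothesis. -/
lemma summable_coefTerm {k : ℕ} (f : (Fin k → F[X]) → ℂ)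
    (hf : Summable (fun G : {G : Fin k → F[X] // ∀ i, (G i).Monic} =>
      (2 : ℝ) ^ (∑ i, omega F (G.1 i)) * ‖muConv F f G.1‖ / ∏ i, (anorm F (G.1 i) : ℝ))) :
    Summable fun s : (Σ H : {H : Fin k → F[X] // ∀ i, (H i).Monic},
      {M : Fin k → F[X] // (∀ i, (M i).Monic) ∧ ∀ i, IsCoprime (M i) (H.1 i)}) =>
      ‖coefTerm F f fun i => s.2.1 i * s.1.1 i‖ := by
  rw [← (regroup F k).summable_iff]
  refine (summable_sigma_of_nonneg fun _ => norm_nonneg _).mpr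
    ⟨fun _ => Summable.of_finite, hf.congr fun Q => ?_⟩
  have : ∀ x, ‖coefTerm F f fun i => ((regroup F k) ⟨Q, x⟩).2.1 i * ((regroup F k) ⟨Q, x⟩).1.1 i‖ =
      ‖coefTerm F f Q.1‖ := fun x => by
    rw [regroup_mul]
  rw [tsum_congr this, tsum_fintype, Finset.sum_const, Finset.card_univ, Fintype.card_coe,
    Fintype.card_piFinset]
  simp_rw [card_unitaryPairs, Finset.prod_pow_eq_pow_sum]
  rw [nsmul_eq_mul, coefTerm, norm_div, norm_prod, mul_div_assoc]
  simp

/-- Summing the expansion over the factorizations `Q = M H` of a fixed `Q` leaves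
`(μ_k ∗ f)(Q)` if every `Q_i` divides `G_i`, and `0` otherwise. -/
lemma sum_coefTerm {k : ℕ} (f : (Fin k → F[X]) → ℂ) {G Q : Fin k → F[X]}
    (hG : ∀ i, (G i).Monic) (hQ : ∀ i, (Q i).Monic) :
    ∑ x ∈ Fintype.piFinset fun i => unitaryPairs F (Q i),
      coefTerm F f Q * ∏ i, etaStar p F (G i) (x i).2 =
    if Q ∈ Fintype.piFinset fun i => mdiv F (G i) then muConv F f Q else 0 := by
  rw [← Finset.mul_sum, ← Finset.prod_univ_sum (fun i => unitaryPairs F (Q i))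
    fun i x => etaStar p F (G i) x.2]
  simp_rw [sum_etaStar p F (hQ _), Fintype.mem_piFinset, mem_mdiv F (hG _).ne_zero]
  split_ifs with h
  · have h1 : ∀ i, (if Q i ∣ G i then (anorm F (Q i) : ℂ) else 0) = anorm F (Q i) := fun i =>
      if_pos (h i).2
    simp_rw [h1]
    refine div_mul_cancel₀ _ (Finset.prod_ne_zero_iff.mpr fun i _ => ?_)
    exact_mod_cast (anorm_pos F (Q i)).ne'
  · push Not at h
    obtain ⟨i, hi⟩ := h
    rw [Finset.prod_eq_zero (Finset.mem_univ i), mul_zero]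
    exact if_neg (hi (hQ i))

/-- The expansion in terms of `coefTerm`. The double family indexed by the pairs `(M, H)` converges
absolutely, so it may be summed along either grouping of `regroup`. -/
lemma expansion_aux {k : ℕ}
    (f : (Fin k → Polynomial F) → ℂ)
    (hf : Summable (fun G : {G : Fin k → Polynomial F // ∀ i, (G i).Monic} =>
      (2 : ℝ) ^ (∑ i, omega F (G.1 i)) * ‖muConv F f G.1‖ / ∏ i, (anorm F (G.1 i) : ℝ)))
    (G : Fin k → Polynomial F) (hG : ∀ i, (G i).Monic) :
    (∀ H : {H : Fin k → Polynomial F // ∀ i, (H i).Monic},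
      Summable (fun M : {M : Fin k → Polynomial F //
          (∀ i, (M i).Monic) ∧ ∀ i, IsCoprime (M i) (H.1 i)} =>
        ‖coefTerm F f (fun i => M.1 i * H.1 i)‖)) ∧
    Summable (fun H : {H : Fin k → Polynomial F // ∀ i, (H i).Monic} =>
      ‖(∑' M : {M : Fin k → Polynomial F //
            (∀ i, (M i).Monic) ∧ ∀ i, IsCoprime (M i) (H.1 i)},
          coefTerm F f (fun i => M.1 i * H.1 i)) *
        ∏ i, etaStar p F (G i) (H.1 i)‖) ∧
    HasSum (fun H : {H : Fin k → Polynomial F // ∀ i, (H i).Monic} =>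
      (∑' M : {M : Fin k → Polynomial F //
            (∀ i, (M i).Monic) ∧ ∀ i, IsCoprime (M i) (H.1 i)},
          coefTerm F f (fun i => M.1 i * H.1 i)) *
        ∏ i, etaStar p F (G i) (H.1 i)) (f G) := by
  have hW := summable_coefTerm F f hf
  set C : ℝ := ∏ i, (anorm F (G i) : ℝ)
  have hbound : ∀ H : {H : Fin k → Polynomial F // ∀ i, (H i).Monic},
      ‖∏ i, etaStar p F (G i) (H.1 i)‖ ≤ C := fun H => by
    rw [norm_prod]
    exact Finset.prod_le_prod (fun _ _ => norm_nonneg _) fun i _ =>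
      norm_etaStar_le p F (hG i).ne_zero (H.2 i)
  let Φ : (Σ H : {H : Fin k → Polynomial F // ∀ i, (H i).Monic},
      {M : Fin k → Polynomial F // (∀ i, (M i).Monic) ∧ ∀ i, IsCoprime (M i) (H.1 i)}) → ℂ :=
    fun s => coefTerm F f (fun i => s.2.1 i * s.1.1 i) * ∏ i, etaStar p F (G i) (s.1.1 i)
  have hΦ : Summable fun s => ‖Φ s‖ := by
    refine Summable.of_nonneg_of_le (fun _ => norm_nonneg _) (fun s => ?_) (hW.mul_right C)
    rw [norm_mul]
    exact mul_le_mul_of_nonneg_left (hbound s.1) (norm_nonneg _)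
  have hfib : ∀ H : {H : Fin k → Polynomial F // ∀ i, (H i).Monic},
      Summable (fun M : {M : Fin k → Polynomial F //
          (∀ i, (M i).Monic) ∧ ∀ i, IsCoprime (M i) (H.1 i)} =>
        ‖coefTerm F f fun i => M.1 i * H.1 i‖) := fun H => hW.sigma_factor H
  have hcoef : ∀ H : {H : Fin k → Polynomial F // ∀ i, (H i).Monic},
      Summable (fun M : {M : Fin k → Polynomial F //
          (∀ i, (M i).Monic) ∧ ∀ i, IsCoprime (M i) (H.1 i)} =>
        coefTerm F f fun i => M.1 i * H.1 i) := fun H => (hfib H).of_norm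
  have htsum : ∀ H : {H : Fin k → Polynomial F // ∀ i, (H i).Monic},
      HasSum (fun M => Φ ⟨H, M⟩)
        ((∑' M : {M : Fin k → Polynomial F //
            (∀ i, (M i).Monic) ∧ ∀ i, IsCoprime (M i) (H.1 i)},
          coefTerm F f fun i => M.1 i * H.1 i) * ∏ i, etaStar p F (G i) (H.1 i)) := by
    intro H
    exact HasSum.mul_right (∏ i, etaStar p F (G i) (H.1 i)) (hcoef H).hasSum
  refine ⟨hfib, ?_, ?_⟩
  · refine Summable.of_nonneg_of_le (fun _ => norm_nonneg _) (fun H => ?_) hΦ.sigma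
    exact (congrArg norm (htsum H).tsum_eq).symm.le.trans
      (norm_tsum_le_tsum_norm (hΦ.sigma_factor H))
  · refine HasSum.sigma (f := Φ) ?_ htsum
    rw [← (regroup F k).hasSum_iff]
    -- `w Q` is the contribution of all factorizations `Q = M H`.
    let w : (Fin k → Polynomial F) → ℂ := fun Q =>
      if Q ∈ Fintype.piFinset fun i => mdiv F (G i) then muConv F f Q else 0
    have hw : HasSum (fun Q : {Q : Fin k → Polynomial F // ∀ i, (Q i).Monic} => w Q.1) (f G) := by
      have h1 : HasSum w (∑ Q ∈ Fintype.piFinset (fun i => mdiv F (G i)), w Q) :=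
        hasSum_sum_of_ne_finset_zero fun Q hQ => if_neg hQ
      have h2 : ∑ Q ∈ Fintype.piFinset (fun i => mdiv F (G i)), w Q = f G := by
        rw [← sum_muConv F f hG]
        exact Finset.sum_congr rfl fun Q hQ => if_pos hQ
      rw [h2] at h1
      have h0 : ∀ Q ∉ Set.range (Subtype.val : {Q : Fin k → Polynomial F // ∀ i, (Q i).Monic} → _),
          w Q = 0 := by
        intro Q hQ
        refine if_neg fun hQ' => hQ ⟨⟨Q, fun i => ?_⟩, rfl⟩
        exact ((mem_mdiv F (hG i).ne_zero).mp (Fintype.mem_piFinset.mp hQ' i)).1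
      exact (Subtype.val_injective.hasSum_iff (f := w) h0).mpr h1
    have hs : Summable (Φ ∘ regroup F k) := (regroup F k).summable_iff.mpr hΦ.of_norm
    refine HasSum.sigma_of_hasSum hw (fun Q => ?_) hs
    have h3 : ∀ x, (Φ ∘ regroup F k) ⟨Q, x⟩ =
        coefTerm F f Q.1 * ∏ i, etaStar p F (G i) (x.1 i).2 := fun x =>
      congrArg (fun R => coefTerm F f R * ∏ i, etaStar p F (G i) (x.1 i).2)
        (regroup_mul F ⟨Q, x⟩)
    have h4 : w Q.1 = ∑ x, (Φ ∘ regroup F k) ⟨Q, x⟩ := by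
      rw [Finset.sum_congr rfl fun x _ => h3 x,
        Finset.sum_coe_sort (Fintype.piFinset fun i => unitaryPairs F (Q.1 i))
          fun x => coefTerm F f Q.1 * ∏ i, etaStar p F (G i) (x i).2,
        sum_coefTerm p F f hG Q.2]
    rw [h4]
    exact hasSum_fintype _

end

/-- Ramanujan expansion of a `k`-variable arithmetic function through the unitary polynomial
Ramanujan sums `η*`: under the summability condition, for every monic tuple `(G₁,…,G_k)`,
each coefficient series `C*_{H₁,…,H_k}` (over monic `M_i` with `(M_i,H_i)=1`) converges
absolutely, and the family `C*_{H₁,…,H_k} η*(G₁,H₁)⋯η*(G_k,H_k)` is absolutely summable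
with sum `f(G₁,…,G_k)`. -/
theorem ramanujan_expansion_etaStar (k : ℕ) (hk : 1 ≤ k)
    (f : (Fin k → Polynomial F) → ℂ)
    (hf : Summable (fun G : {G : Fin k → Polynomial F // ∀ i, (G i).Monic} =>
      (2 : ℝ) ^ (∑ i, omega F (G.1 i)) * ‖muConv F f G.1‖ / ∏ i, (anorm F (G.1 i) : ℝ)))
    (G : Fin k → Polynomial F) (hG : ∀ i, (G i).Monic) :
    (∀ H : {H : Fin k → Polynomial F // ∀ i, (H i).Monic},
      Summable (fun M : {M : Fin k → Polynomial F //
          (∀ i, (M i).Monic) ∧ ∀ i, IsCoprime (M i) (H.1 i)} =>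
        ‖muConv F f (fun i => M.1 i * H.1 i) / ∏ i, (anorm F (M.1 i * H.1 i) : ℂ)‖)) ∧
    Summable (fun H : {H : Fin k → Polynomial F // ∀ i, (H i).Monic} =>
      ‖(∑' M : {M : Fin k → Polynomial F //
            (∀ i, (M i).Monic) ∧ ∀ i, IsCoprime (M i) (H.1 i)},
          muConv F f (fun i => M.1 i * H.1 i) / ∏ i, (anorm F (M.1 i * H.1 i) : ℂ)) *
        ∏ i, etaStar p F (G i) (H.1 i)‖) ∧
    HasSum (fun H : {H : Fin k → Polynomial F // ∀ i, (H i).Monic} =>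
      (∑' M : {M : Fin k → Polynomial F //
            (∀ i, (M i).Monic) ∧ ∀ i, IsCoprime (M i) (H.1 i)},
          muConv F f (fun i => M.1 i * H.1 i) / ∏ i, (anorm F (M.1 i * H.1 i) : ℂ)) *
        ∏ i, etaStar p F (G i) (H.1 i)) (f G) := by
  exact expansion_aux p F f hf G hG
end

section
/- Let g : A₊ → ℂ and k ≥ 1 with Σ_{G ∈ A₊} 2^{k·ω(G)} · |(μ ∗ g)(G)| / |G|^k < ∞. Then for all G₁,…,G_k ∈ A₊ the family ( C_{H₁,…,H_k} · η(G₁,H₁)⋯η(G_k,H_k) ) indexed by (H₁,…,H_k) ∈ (A₊)^k is absolutely summable with sum g((G₁,…,G_k)), where, writing Q = [H₁,…,H_k], C_{H₁,…,H_k} = (1/|Q|^k) · Σ_{M ∈ A₊} (μ ∗ g)(MQ)/|M|^k. -/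
/-!
Write `f = μ ∗ g`, so that `g(N) = ∑_{D ∣ N} f(D)` by Möbius inversion (`sum_muConv1`). The expansion
comes from evaluating in two orders the double series with terms
`(f(N) / |N|^k) ∏ᵢ η(Gᵢ,Hᵢ)`, over monic `N` and tuples `H` of monic divisors of `N`.

* Summing over `H` first: the orthogonality relation `∑_{H ∣ N} η(G,H) = |N|` if `N ∣ G`, and `0`
  otherwise (`sum_eta`), leaves `∑ f(N)` over the common divisors `N` of the `Gᵢ`, which is
  `g((G₁,…,G_k))`. The relation holds because every residue modulo `N` is `D * (N / H)` for a unique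
  monic `H ∣ N` and a unique residue `D` modulo `H` prime to `H`, while `E(G,N)` is a character of
  the residues modulo `N`, trivial exactly when `N ∣ G`, since the trace form is nonzero.
* Summing over `N` first: the `N` divisible by all `Hᵢ` are the `M * Q` with `Q = [H₁,…,H_k]`, and
  the result is the coefficient `C_{H₁,…,H_k}` times `∏ᵢ η(Gᵢ,Hᵢ)` (`tsum_doubleTerm_column`).

The two orders agree because the double series converges absolutely. Möbius inversion of the
orthogonality relation gives `η(G,H) = ∑_{D ∣ (G,H)} μ(H/D) |D|`, hence
`∑_{H ∣ N} |η(G,H)| ≤ 2^ω(N) ∑_{D ∣ G} |D|` (`sum_norm_eta_le`), so that the row indexed by `N` is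
at most a constant times `2^(kω(N)) |f(N)| / |N|^k`.
-/

open Polynomial UniqueFactorizationMonoid

variable (p : ℕ) [Fact p.Prime] (F : Type) [Field F] [Fintype F] [DecidableEq F]
  [Algebra (ZMod p) F]

/-- The Dirichlet convolution `(μ ∗ g)(G) = Σ_{D E = G, D,E monic} μ(D) g(E)` of the Möbius
function with a one-variable arithmetic function `g` on monic polynomials. -/
noncomputable def muConv1 (g : Polynomial F → ℂ) (G : Polynomial F) : ℂ :=
  ∑' DE : {DE : Polynomial F × Polynomial F //
      DE.1.Monic ∧ DE.2.Monic ∧ DE.1 * DE.2 = G},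
    (mu F DE.1.1 : ℂ) * g DE.1.2

/-! ### Factorisations of monic polynomials -/

section Factorisations

omit [DecidableEq F] in
lemma finite_degree_lt (n : ℕ) : {D : F[X] | D.degree < n}.Finite := by
  have : Finite (degreeLT F n) := Finite.of_equiv _ (degreeLTEquiv F n).toEquiv.symm
  refine (Set.toFinite (degreeLT F n : Set F[X])).subset fun D hD => ?_
  simpa [mem_degreeLT] using hD

omit [DecidableEq F] in
lemma finite_antidiag (N : F[X]) :
    {x : F[X] × F[X] | x.1.Monic ∧ x.2.Monic ∧ x.1 * x.2 = N}.Finite := by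
  have h := finite_degree_lt F (N.natDegree + 1)
  refine (h.prod h).subset ?_
  rintro ⟨a, b⟩ ⟨ha, hb, rfl⟩
  simp only [Set.mem_prod, Set.mem_ofPred_eq, ha.natDegree_mul hb, degree_eq_natDegree ha.ne_zero,
    degree_eq_natDegree hb.ne_zero, Nat.cast_lt]
  omega

/-- The factorisations `N = D * E` into an ordered pair of monic polynomials. -/
noncomputable def antidiag (N : F[X]) : Finset (F[X] × F[X]) := (finite_antidiag F N).toFinset

variable {F}

omit [DecidableEq F] in
@[simp] lemma mem_antidiag {N : F[X]} {x : F[X] × F[X]} :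
    x ∈ antidiag F N ↔ x.1.Monic ∧ x.2.Monic ∧ x.1 * x.2 = N := by
  simp [antidiag]

omit [DecidableEq F] in
lemma sum_antidiag_swap {M : Type*} [AddCommMonoid M] (N : F[X]) (f : F[X] → F[X] → M) :
    ∑ x ∈ antidiag F N, f x.1 x.2 = ∑ x ∈ antidiag F N, f x.2 x.1 := by
  refine Finset.sum_nbij' Prod.swap Prod.swap ?_ ?_ ?_ ?_ ?_ <;>
    simp +contextual [mul_comm]

omit [DecidableEq F] in
/-- Associativity of Dirichlet convolution: both sides run over the factorisations
`N = a * b * c`. -/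
lemma sum_antidiag_assoc {M : Type*} [AddCommMonoid M] (N : F[X]) (f : F[X] → F[X] → F[X] → M) :
    ∑ x ∈ antidiag F N, ∑ y ∈ antidiag F x.1, f y.1 y.2 x.2 =
      ∑ x ∈ antidiag F N, ∑ y ∈ antidiag F x.2, f x.1 y.1 y.2 := by
  rw [Finset.sum_sigma', Finset.sum_sigma']
  refine Finset.sum_nbij' (fun z => ⟨(z.2.1, z.2.2 * z.1.2), (z.2.2, z.1.2)⟩)
    (fun z => ⟨(z.1.1 * z.2.1, z.2.2), (z.1.1, z.2.1)⟩) ?_ ?_ ?_ ?_ ?_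
  · rintro ⟨⟨a, b⟩, ⟨c, d⟩⟩ h
    simp only [Finset.mem_sigma, mem_antidiag] at h ⊢
    obtain ⟨⟨ha, hb, rfl⟩, hc, hd, rfl⟩ := h
    exact ⟨⟨hc, hd.mul hb, by ring⟩, hd, hb, trivial⟩
  · rintro ⟨⟨a, b⟩, ⟨c, d⟩⟩ h
    simp only [Finset.mem_sigma, mem_antidiag] at h ⊢
    obtain ⟨⟨ha, hb, rfl⟩, hc, hd, rfl⟩ := h
    exact ⟨⟨ha.mul hc, hd, by ring⟩, ha, hc, trivial⟩
  · rintro ⟨⟨a, b⟩, ⟨c, d⟩⟩ h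
    simp only [Finset.mem_sigma, mem_antidiag] at h
    obtain ⟨⟨ha, hb, rfl⟩, hc, hd, rfl⟩ := h
    rfl
  · rintro ⟨⟨a, b⟩, ⟨c, d⟩⟩ h
    simp only [Finset.mem_sigma, mem_antidiag] at h
    obtain ⟨⟨ha, hb, rfl⟩, hc, hd, rfl⟩ := h
    rfl
  · intros; rfl

omit [DecidableEq F] in
/-- The indicator function of `1` is the unit for Dirichlet convolution. -/
lemma sum_antidiag_eq_single_one {M : Type*} [AddCommMonoid M] [DecidableEq F[X]] {N : F[X]}
    (hN : N.Monic) (f : F[X] → M) :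
    ∑ x ∈ antidiag F N, (if x.2 = 1 then f x.1 else 0) = f N := by
  rw [Finset.sum_eq_single (N, 1)]
  · simp
  · rintro ⟨a, b⟩ h hne
    simp only [mem_antidiag] at h
    obtain ⟨ha, hb, rfl⟩ := h
    rw [if_neg]
    rintro rfl
    simp at hne
  · intro h
    simp [hN, monic_one] at h

end Factorisations

/-! ### The Möbius function -/

section Moebius

variable {F}

open scoped Classical in
/-- Squarefree monic divisors of `N` correspond to sets of monic irreducible divisors of `N`. -/
lemma sum_antidiag_squarefree {M : Type*} [AddCommMonoid M] {N : F[X]} (hN : N.Monic)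
    (h : ℕ → M) :
    ∑ x ∈ antidiag F N, (if Squarefree x.1 then h (omega F x.1) else 0) =
      ∑ S ∈ (normalizedFactors N).toFinset.powerset, h S.card := by
  have hprod : ∀ {D : F[X]}, D.Monic → (normalizedFactors D).prod = D := fun hD => by
    rw [prod_normalizedFactors_eq hD.ne_zero, hD.normalize_eq_self]
  have hmonic : ∀ P ∈ normalizedFactors N, P.Monic := fun P hP => by
    rw [← normalize_normalized_factor P hP]
    exact monic_normalize (irreducible_of_normalized_factor P hP).ne_zero
  have hsub : ∀ S ∈ (normalizedFactors N).toFinset.powerset, ∀ P ∈ S.val,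
      P ∈ normalizedFactors N := fun S hS P hP =>
    Multiset.mem_toFinset.1 (Finset.mem_powerset.1 hS hP)
  have hnf : ∀ S ∈ (normalizedFactors N).toFinset.powerset,
      normalizedFactors (S.val.prod) = S.val := fun S hS => by
    have hS' := hsub S hS
    rw [normalizedFactors_prod_eq _ fun P hP => irreducible_of_normalized_factor P (hS' P hP)]
    conv_rhs => rw [← Multiset.map_id S.val]
    exact Multiset.map_congr rfl fun P hP => normalize_normalized_factor P (hS' P hP)
  rw [← Finset.sum_filter]
  symm
  have key : ∀ S ∈ (normalizedFactors N).toFinset.powerset,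
      S.val.prod.Monic ∧ S.val.prod ∣ N := fun S hS => by
    have h1 : S.val.prod.Monic := by
      have := monic_multiset_prod_of_monic S.val id fun P hP => hmonic P (hsub S hS P hP)
      simpa using this
    refine ⟨h1, ?_⟩
    rw [dvd_iff_normalizedFactors_le_normalizedFactors h1.ne_zero hN.ne_zero, hnf S hS,
      Multiset.le_iff_subset S.nodup]
    exact hsub S hS
  refine Finset.sum_bij' (fun S _ => (S.val.prod, N /ₘ S.val.prod))
    (fun x _ => (normalizedFactors x.1).toFinset) ?_ ?_ ?_ ?_ ?_
  · intro S hS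
    obtain ⟨h1, D, h2⟩ := key S hS
    have h3 : N /ₘ S.val.prod = D := by rw [h2, mul_divByMonic_cancel_left _ h1]
    simp only [Finset.mem_filter, mem_antidiag, h3]
    refine ⟨⟨h1, h1.of_mul_monic_left (h2 ▸ hN), h2.symm⟩, ?_⟩
    rw [squarefree_iff_nodup_normalizedFactors h1.ne_zero, hnf S hS]
    exact S.nodup
  · rintro ⟨a, b⟩ hx
    simp only [Finset.mem_filter, mem_antidiag] at hx
    obtain ⟨⟨ha, hb, rfl⟩, hs⟩ := hx
    rw [Finset.mem_powerset]
    refine Multiset.toFinset_subset.2 (Multiset.subset_of_le ?_)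
    rw [← dvd_iff_normalizedFactors_le_normalizedFactors ha.ne_zero hN.ne_zero]
    exact dvd_mul_right _ _
  · intro S hS
    ext P
    simp only [hnf S hS, Multiset.mem_toFinset, Finset.mem_val]
  · rintro ⟨a, b⟩ hx
    simp only [Finset.mem_filter, mem_antidiag] at hx
    obtain ⟨⟨ha, hb, rfl⟩, hs⟩ := hx
    have hn := (squarefree_iff_nodup_normalizedFactors ha.ne_zero).1 hs
    have : (normalizedFactors a).toFinset.val.prod = a := by
      rw [Multiset.toFinset_val, hn.dedup, hprod ha]
    simp only [this, mul_divByMonic_cancel_left _ ha]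
  · intro S hS
    rw [omega, hnf S hS]
    refine congrArg h (congrArg Finset.card ?_)
    ext P
    simp only [Multiset.mem_toFinset, Finset.mem_val]

open scoped Classical in
lemma sum_antidiag_mu {N : F[X]} (hN : N.Monic) :
    ∑ x ∈ antidiag F N, (mu F x.1 : ℂ) = if N = 1 then 1 else 0 := by
  have h := sum_antidiag_squarefree hN (fun n => (-1 : ℤ) ^ n)
  rw [Finset.sum_powerset_neg_one_pow_card] at h
  have h1 : (normalizedFactors N).toFinset = ∅ ↔ N = 1 := by
    rw [Multiset.toFinset_eq_empty]
    constructor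
    · intro h0
      rw [← hN.normalize_eq_self, ← prod_normalizedFactors_eq hN.ne_zero, h0, Multiset.prod_zero]
    · rintro rfl
      exact normalizedFactors_one
  simp only [h1] at h
  have h2 : ∑ x ∈ antidiag F N, mu F x.1 = if N = 1 then 1 else 0 := by
    rw [← h]
    rfl
  exact_mod_cast congrArg (Int.cast : ℤ → ℂ) h2

open scoped Classical in
lemma sum_antidiag_norm_mu {N : F[X]} (hN : N.Monic) :
    ∑ x ∈ antidiag F N, ‖(mu F x.1 : ℂ)‖ = 2 ^ omega F N := by
  have h := sum_antidiag_squarefree hN (fun _ => (1 : ℝ))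
  rw [Finset.sum_const, Finset.card_powerset] at h
  rw [show (2 : ℝ) ^ omega F N = 2 ^ omega F N • (1 : ℝ) by simp, omega, ← h]
  refine Finset.sum_congr rfl fun x _ => ?_
  unfold mu
  split_ifs <;> simp

omit [Fintype F] in
open scoped Classical in
lemma omega_le_of_dvd {D N : F[X]} (hN : N ≠ 0) (h : D ∣ N) : omega F D ≤ omega F N := by
  refine Finset.card_le_card (Multiset.toFinset_subset.2 (Multiset.subset_of_le ?_))
  exact (dvd_iff_normalizedFactors_le_normalizedFactors (ne_zero_of_dvd_ne_zero hN h) hN).1 h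

lemma muConv1_eq_sum (g : F[X] → ℂ) (N : F[X]) :
    muConv1 F g N = ∑ x ∈ antidiag F N, (mu F x.1 : ℂ) * g x.2 := by
  have : Finite {x : F[X] × F[X] // x.1.Monic ∧ x.2.Monic ∧ x.1 * x.2 = N} :=
    (finite_antidiag F N).to_subtype
  have := Fintype.ofFinite {x : F[X] × F[X] // x.1.Monic ∧ x.2.Monic ∧ x.1 * x.2 = N}
  rw [muConv1, tsum_fintype]
  exact (Finset.sum_subtype _ (fun x => mem_antidiag)
    (fun x : F[X] × F[X] => (mu F x.1 : ℂ) * g x.2)).symm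

/-- Möbius inversion: if `f = μ ∗ g` then `g = f ∗ 1`. -/
lemma sum_muConv1 (g : F[X] → ℂ) {N : F[X]} (hN : N.Monic) :
    ∑ x ∈ antidiag F N, muConv1 F g x.1 = g N := by
  classical
  simp_rw [muConv1_eq_sum]
  have h := sum_antidiag_assoc N (fun a b _ => (mu F b : ℂ) * g a)
  rw [Finset.sum_congr rfl fun x _ =>
    sum_antidiag_swap x.1 (fun a b => (mu F a : ℂ) * g b), h,
    ← sum_antidiag_eq_single_one hN g]
  refine Finset.sum_congr rfl fun x hx => ?_
  rw [← Finset.sum_mul, sum_antidiag_mu (mem_antidiag.1 hx).2.1]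
  split_ifs <;> simp

/-- Möbius inversion: if `Φ = η ∗ 1` then `η = μ ∗ Φ`. -/
lemma sum_mu_mul_sum (f : F[X] → ℂ) {N : F[X]} (hN : N.Monic) :
    ∑ x ∈ antidiag F N, (mu F x.1 : ℂ) * ∑ y ∈ antidiag F x.2, f y.1 = f N := by
  classical
  simp_rw [Finset.mul_sum]
  rw [Finset.sum_congr rfl fun x _ =>
    sum_antidiag_swap x.2 (fun a _ => (mu F x.1 : ℂ) * f a)]
  rw [← sum_antidiag_assoc N (fun a _ c => (mu F a : ℂ) * f c), ← sum_antidiag_eq_single_one hN f,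
    sum_antidiag_swap N fun a b => if b = 1 then f a else 0]
  refine Finset.sum_congr rfl fun x hx => ?_
  rw [← Finset.sum_mul, sum_antidiag_mu (mem_antidiag.1 hx).1]
  split_ifs <;> simp

end Moebius

/-! ### Polynomial Ramanujan sums -/

section Ramanujan

/-- The standard residue system modulo a polynomial of degree `n`: the polynomials of degree
less than `n`. -/
noncomputable def residues (n : ℕ) : Finset F[X] := (finite_degree_lt F n).toFinset

variable {F}

omit [DecidableEq F] in
@[simp] lemma mem_residues {n : ℕ} {D : F[X]} : D ∈ residues F n ↔ D.degree < n := by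
  simp [residues]

omit [DecidableEq F] in
open scoped Classical in
lemma eta_eq_sum (G : F[X]) {H : F[X]} (hH : H ≠ 0) :
    eta p F G H =
      ∑ D ∈ (residues F H.natDegree).filter (fun D => IsCoprime D H), echar p F G H D := by
  have hmem : ∀ D : F[X], D ∈ (residues F H.natDegree).filter (fun D => IsCoprime D H) ↔
      D.degree < H.degree ∧ IsCoprime D H := fun D => by
    simp [degree_eq_natDegree hH]
  have : Fintype {D : F[X] // D.degree < H.degree ∧ IsCoprime D H} := Fintype.subtype _ hmem
  rw [_root_.eta, tsum_fintype]
  exact (Finset.sum_subtype _ hmem _).symm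

omit [Fintype F] [DecidableEq F] in
/-- The remainder of `A * K` modulo `H * K` is `K` times the remainder `R` of `A` modulo `H`, and
as `K` is monic its coefficient just below `deg (H * K)` is that of `R` just below `deg H`. -/
lemma tmap_mul_mul {H K : F[X]} (hH : H.Monic) (hK : K.Monic) (A : F[X]) :
    tmap F (H * K) (A * K) = tmap F H A := by
  have hmod : (A * K) % (H * K) = (A % H) * K := by
    rw [← modByMonic_eq_mod _ (hH.mul hK)]
    refine (div_modByMonic_unique (A / H) _ (hH.mul hK) ⟨?_, ?_⟩).2
    · linear_combination K * EuclideanDomain.mod_add_div A H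
    · rw [degree_mul, degree_mul]
      have := EuclideanDomain.mod_lt A hH.ne_zero
      exact WithBot.add_lt_add_right (by simpa using hK.ne_zero) this
  rw [tmap, tmap, hmod, hH.natDegree_mul hK]
  rcases Nat.eq_zero_or_pos H.natDegree with h0 | hpos
  -- for `H = 1` the truncated `deg H - 1` is `0`, but all remainders vanish
  · obtain rfl := hH.natDegree_eq_zero.1 h0
    simp [← modByMonic_eq_mod A monic_one]
  · rw [show H.natDegree + K.natDegree - 1 = (H.natDegree - 1) + K.natDegree by omega,
      coeff_mul_add_eq_of_natDegree_le _ le_rfl, hK.coeff_natDegree, mul_one]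
    have := natDegree_mod_lt A hpos.ne'
    omega

omit [Fintype F] [DecidableEq F] in
lemma echar_mul_mul (G : F[X]) {H K : F[X]} (hH : H.Monic) (hK : K.Monic) (D : F[X]) :
    echar p F G (H * K) (D * K) = echar p F G H D := by
  rw [echar, echar, ← mul_assoc, tmap_mul_mul hH hK]

omit [Fintype F] [DecidableEq F] in
/-- Unless `N ∣ G`, the functional `D ↦ t_N(G * D)` maps onto `F`. -/
lemma exists_tmap_eq_s2 {G N : F[X]} (hN : N.Monic) (h : ¬ N ∣ G) (c : F) :
    ∃ D : F[X], D.degree < N.natDegree ∧ tmap F N (G * D) = c := by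
  set R := G % N with hR
  have hR0 : R ≠ 0 := fun h0 => h (EuclideanDomain.mod_eq_zero.1 h0)
  have hRN : R.natDegree < N.natDegree :=
    natDegree_lt_natDegree hR0 (EuclideanDomain.mod_lt G hN.ne_zero)
  -- the remainder of `G` has degree `r < m`, and `T ^ (m - 1 - r)` shifts its leading term to
  -- the place `m - 1` without any further reduction
  set D : F[X] := monomial (N.natDegree - 1 - R.natDegree) (R.leadingCoeff⁻¹ * c) with hD
  have hDdeg : D.degree < N.natDegree :=
    (degree_monomial_le _ _).trans_lt (by exact_mod_cast by omega)
  refine ⟨D, hDdeg, ?_⟩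
  have hdeg : (R * D).degree < N.degree := by
    rw [degree_eq_natDegree hN.ne_zero]
    refine (degree_le_natDegree.trans_lt ?_)
    have h1 : (R * D).natDegree ≤ R.natDegree + (N.natDegree - 1 - R.natDegree) :=
      natDegree_mul_le.trans (Nat.add_le_add_left (natDegree_monomial_le _) _)
    exact_mod_cast by omega
  have hDN : D % N = D := by
    rw [mod_eq_self_iff hN.ne_zero, degree_eq_natDegree hN.ne_zero]
    exact hDdeg
  rw [tmap, mul_mod, ← hR, hDN, (mod_eq_self_iff hN.ne_zero).2 hdeg,
    show N.natDegree - 1 = R.natDegree + (N.natDegree - 1 - R.natDegree) by omega, hD,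
    coeff_mul_monomial, coeff_natDegree, mul_inv_cancel_left₀]
  simpa using hR0

/-- The additive character `D ↦ E(G,N)(D)` of the group of residues modulo `N`. -/
noncomputable def residueChar (G N : F[X]) : AddChar (degreeLT F N.natDegree) ℂ where
  toFun D := echar p F G N D
  map_zero_eq_one' := by simp [echar, tmap]
  map_add_eq_mul' a b := by
    have h : ∀ D : F[X], echar p F G N D =
        ZMod.stdAddChar (Algebra.trace (ZMod p) F (tmap F N (G * D))) := fun D => by
      rw [ZMod.stdAddChar_apply, ZMod.toCircle_apply, echar]
    have h2 : tmap F N (G * (a + b : F[X])) = tmap F N (G * a) + tmap F N (G * b) := by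
      rw [tmap, mul_add, add_mod, coeff_add, tmap, tmap]
    rw [Submodule.coe_add, h, h, h, h2, map_add, AddChar.map_add_eq_mul]

omit [DecidableEq F] in
open scoped Classical in
/-- Orthogonality: `∑_{D mod N} E(G,N)(D)` is `|N|` if `N ∣ G` and `0` otherwise. -/
lemma sum_echar (G : F[X]) {N : F[X]} (hN : N.Monic) :
    ∑ D ∈ residues F N.natDegree, echar p F G N D =
      if N ∣ G then (anorm F N : ℂ) else 0 := by
  have : Fintype (degreeLT F N.natDegree) :=
    Fintype.ofEquiv _ (degreeLTEquiv F N.natDegree).toEquiv.symm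
  have hcard : Fintype.card (degreeLT F N.natDegree) = anorm F N := by
    rw [Fintype.card_congr (degreeLTEquiv F N.natDegree).toEquiv]
    simp [anorm]
  have hsum := AddChar.sum_eq_ite (residueChar p G N)
  have h1 : ∑ D ∈ residues F N.natDegree, echar p F G N D =
      ∑ D : degreeLT F N.natDegree, residueChar p G N D :=
    Finset.sum_subtype _ (fun D => by rw [mem_residues, mem_degreeLT]) _
  rw [h1, hsum, hcard]
  refine if_congr ?_ rfl rfl
  constructor
  · intro h0
    by_contra hdvd
    obtain ⟨c, hc⟩ := Algebra.trace_surjective (ZMod p) F 1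
    obtain ⟨D, hD, hDc⟩ := exists_tmap_eq_s2 hN hdvd c
    have h2 : residueChar p G N ⟨D, mem_degreeLT.2 hD⟩ = 1 := by rw [h0]; rfl
    have h3 : residueChar p G N ⟨D, mem_degreeLT.2 hD⟩ = ZMod.stdAddChar (1 : ZMod p) := by
      change echar p F G N D = _
      rw [echar, hDc, hc, ZMod.stdAddChar_apply, ZMod.toCircle_apply]
    rw [h3, ← AddChar.map_zero_eq_one (ZMod.stdAddChar (N := p))] at h2
    exact one_ne_zero (ZMod.injective_stdAddChar h2)
  · intro hdvd
    ext D
    change echar p F G N D = 1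
    have : (G * (D : F[X])) % N = 0 :=
      EuclideanDomain.mod_eq_zero.2 (hdvd.mul_right _)
    simp [echar, tmap, this]

open scoped Classical in
/-- Sorting the residues modulo `N` by their greatest common divisor with `N` expresses the
orthogonality relation through Ramanujan sums. -/
lemma sum_eta (G : F[X]) {N : F[X]} (hN : N.Monic) :
    ∑ x ∈ antidiag F N, eta p F G x.1 = if N ∣ G then (anorm F N : ℂ) else 0 := by
  rw [← sum_echar p G hN, Finset.sum_congr rfl fun x hx =>
    eta_eq_sum p G (mem_antidiag.1 hx).1.ne_zero, Finset.sum_sigma']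
  refine Finset.sum_bij (fun z _ => z.2 * z.1.2) ?_ ?_ ?_ ?_
  · rintro ⟨⟨H, K⟩, D⟩ h
    simp only [Finset.mem_sigma, mem_antidiag, Finset.mem_filter, mem_residues] at h ⊢
    obtain ⟨⟨hH, hK, rfl⟩, hD, hc⟩ := h
    rw [← degree_eq_natDegree hN.ne_zero, degree_mul, degree_mul]
    rw [← degree_eq_natDegree hH.ne_zero] at hD
    exact WithBot.add_lt_add_right (by simpa using hK.ne_zero) hD
  · rintro ⟨⟨H, K⟩, D⟩ h ⟨⟨H', K'⟩, D'⟩ h' heq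
    simp only [Finset.mem_sigma, mem_antidiag, Finset.mem_filter, mem_residues] at h h' heq
    -- the reduced fraction D / H, with monic denominator, is determined by its value D * K / N
    obtain ⟨⟨hH, hK, hN1⟩, hD, hc⟩ := h
    obtain ⟨⟨hH', hK', hN2⟩, hD', hc'⟩ := h'
    have hfrac : D * H' = D' * H := by
      have h1 : K * K' ≠ 0 := mul_ne_zero hK.ne_zero hK'.ne_zero
      refine mul_right_cancel₀ h1 ?_
      linear_combination H' * K' * heq + D' * K' * (hN2 - hN1)
    have h1 : H ∣ H' := hc.symm.dvd_of_dvd_mul_left ⟨D', by rw [hfrac, mul_comm]⟩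
    have h2 : H' ∣ H := hc'.symm.dvd_of_dvd_mul_left ⟨D, by rw [← hfrac, mul_comm]⟩
    obtain rfl := eq_of_monic_of_associated hH hH' (associated_of_dvd_dvd h1 h2)
    obtain rfl := mul_left_cancel₀ hH.ne_zero (hN1.trans hN2.symm)
    obtain rfl := mul_right_cancel₀ hK.ne_zero heq
    rfl
  · intro D hD
    rw [mem_residues, ← degree_eq_natDegree hN.ne_zero] at hD
    set K := normalize (EuclideanDomain.gcd D N) with hKdef
    have hassoc : Associated K (EuclideanDomain.gcd D N) := normalize_associated _
    have hg0 : EuclideanDomain.gcd D N ≠ 0 := fun h0 =>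
      hN.ne_zero (EuclideanDomain.gcd_eq_zero_iff.1 h0).2
    have hK : K.Monic := monic_normalize hg0
    obtain ⟨H, hH⟩ : K ∣ N := hassoc.dvd.trans (EuclideanDomain.gcd_dvd_right D N)
    obtain ⟨E, hE⟩ : K ∣ D := hassoc.dvd.trans (EuclideanDomain.gcd_dvd_left D N)
    have hHm : H.Monic := hK.of_mul_monic_left (hH ▸ hN)
    refine ⟨⟨(H, K), E⟩, ?_, by rw [hE, mul_comm]⟩
    simp only [Finset.mem_sigma, mem_antidiag, Finset.mem_filter, mem_residues]
    refine ⟨⟨hHm, hK, by rw [hH, mul_comm]⟩, ?_, ?_⟩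
    · rw [← degree_eq_natDegree hHm.ne_zero]
      by_contra! hle
      refine hD.not_ge ?_
      rw [hE, hH, degree_mul, degree_mul]
      gcongr
    · have h1 : K ∣ D * EuclideanDomain.gcdA D N + N * EuclideanDomain.gcdB D N := by
        rw [← EuclideanDomain.gcd_eq_gcd_ab]
        exact hassoc.dvd
      have h2 : D * EuclideanDomain.gcdA D N + N * EuclideanDomain.gcdB D N ∣ K := by
        rw [← EuclideanDomain.gcd_eq_gcd_ab]
        exact hassoc.symm.dvd
      obtain ⟨u, hu⟩ := h2
      refine ⟨EuclideanDomain.gcdA D N * u, EuclideanDomain.gcdB D N * u, ?_⟩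
      refine mul_left_cancel₀ hK.ne_zero ?_
      linear_combination -hu - (EuclideanDomain.gcdA D N * u) * hE -
        (EuclideanDomain.gcdB D N * u) * hH
  · rintro ⟨⟨H, K⟩, D⟩ h
    simp only [Finset.mem_sigma, mem_antidiag, Finset.mem_filter, mem_residues] at h ⊢
    obtain ⟨⟨hH, hK, rfl⟩, hD, hc⟩ := h
    rw [echar_mul_mul p G hH hK]

/-- The bound `∑_{H ∣ N} |η(G,H)| ≤ 2 ^ ω(N) * σ(G)`, where `σ(G)` is the sum of the `|D|` over
the monic divisors `D` of `G`. -/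
lemma sum_norm_eta_le {G N : F[X]} (hG : G.Monic) (hN : N.Monic) :
    ∑ x ∈ antidiag F N, ‖eta p F G x.1‖ ≤
      2 ^ omega F N * ∑ x ∈ antidiag F G, (anorm F x.1 : ℝ) := by
  classical
  set c : F[X] → ℝ := fun D => if D ∣ G then (anorm F D : ℝ) else 0 with hcdef
  have hc : ∀ D, 0 ≤ c D := fun D => by
    simp only [hcdef]; split_ifs <;> positivity
  have hη : ∀ H : F[X], H.Monic →
      ‖eta p F G H‖ ≤ ∑ y ∈ antidiag F H, ‖(mu F y.2 : ℂ)‖ * c y.1 := fun H hH => by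
    rw [← sum_mu_mul_sum (eta p F G) hH,
      sum_antidiag_swap H fun a b => ‖(mu F b : ℂ)‖ * c a]
    refine (norm_sum_le _ _).trans (Finset.sum_le_sum fun y hy => ?_)
    rw [norm_mul, sum_eta p G (mem_antidiag.1 hy).2.1]
    refine mul_le_mul_of_nonneg_left ?_ (norm_nonneg _)
    simp only [hcdef]
    split_ifs <;> simp
  calc ∑ x ∈ antidiag F N, ‖eta p F G x.1‖
      ≤ ∑ x ∈ antidiag F N, ∑ y ∈ antidiag F x.1, ‖(mu F y.2 : ℂ)‖ * c y.1 :=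
        Finset.sum_le_sum fun x hx => hη _ (mem_antidiag.1 hx).1
    _ = ∑ x ∈ antidiag F N, ∑ y ∈ antidiag F x.2, ‖(mu F y.1 : ℂ)‖ * c x.1 :=
        sum_antidiag_assoc N fun a b _ => ‖(mu F b : ℂ)‖ * c a
    _ = ∑ x ∈ antidiag F N, 2 ^ omega F x.2 * c x.1 := by
        refine Finset.sum_congr rfl fun x hx => ?_
        rw [← Finset.sum_mul, sum_antidiag_norm_mu (mem_antidiag.1 hx).2.1]
    _ ≤ ∑ x ∈ antidiag F N, 2 ^ omega F N * c x.1 := by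
        refine Finset.sum_le_sum fun x hx => mul_le_mul_of_nonneg_right ?_ (hc _)
        refine pow_le_pow_right₀ one_le_two (omega_le_of_dvd hN.ne_zero ?_)
        exact ⟨x.1, by rw [← (mem_antidiag.1 hx).2.2, mul_comm]⟩
    _ = 2 ^ omega F N * ∑ x ∈ antidiag F N, c x.1 := by rw [Finset.mul_sum]
    _ ≤ 2 ^ omega F N * ∑ x ∈ antidiag F G, (anorm F x.1 : ℝ) := by
        refine mul_le_mul_of_nonneg_left ?_ (by positivity)
        simp only [hcdef]
        rw [← Finset.sum_filter]
        have hinj : Set.InjOn (fun x : F[X] × F[X] => (x.1, G /ₘ x.1))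
            ((antidiag F N).filter fun x => x.1 ∣ G) := by
          rintro ⟨a, b⟩ h ⟨a', b'⟩ h' heq
          simp only [Finset.coe_filter, Set.mem_ofPred_eq, mem_antidiag] at h h'
          obtain rfl : a = a' := congrArg Prod.fst heq
          obtain rfl := mul_left_cancel₀ h.1.1.ne_zero (h.1.2.2.trans h'.1.2.2.symm)
          rfl
        rw [← Finset.sum_image (f := fun x : F[X] × F[X] => (anorm F x.1 : ℝ)) hinj]
        refine Finset.sum_le_sum_of_subset_of_nonneg ?_ fun _ _ _ => by positivity
        intro z hz
        obtain ⟨⟨a, b⟩, hab, rfl⟩ := Finset.mem_image.1 hz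
        simp only [Finset.mem_filter, mem_antidiag] at hab ⊢
        obtain ⟨⟨ha, -, -⟩, d, rfl⟩ := hab
        rw [mul_divByMonic_cancel_left _ ha]
        exact ⟨ha, ha.of_mul_monic_left hG, rfl⟩

end Ramanujan

/-! ### Rearranging the double series -/

section DoubleSeries

variable {F}

open scoped Classical in
/-- The monic divisors of `N`. -/
noncomputable def monicDivs (N : F[X]) : Finset {D : F[X] // D.Monic} :=
  ((antidiag F N).image Prod.fst).subtype fun D => D.Monic

lemma mem_monicDivs {N : F[X]} (hN : N.Monic) {D : {D : F[X] // D.Monic}} :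
    D ∈ monicDivs N ↔ D.1 ∣ N := by
  simp only [monicDivs, Finset.mem_subtype, Finset.mem_image, mem_antidiag]
  constructor
  · rintro ⟨⟨a, b⟩, ⟨-, -, h⟩, h'⟩
    exact ⟨b, by rw [← h, ← h']⟩
  · rintro ⟨b, hb⟩
    exact ⟨(D.1, b), ⟨D.2, D.2.of_mul_monic_left (hb ▸ hN), hb.symm⟩, rfl⟩

lemma sum_monicDivs {M : Type*} [AddCommMonoid M] {N : F[X]} (hN : N.Monic) (f : F[X] → M) :
    ∑ D ∈ monicDivs N, f D.1 = ∑ x ∈ antidiag F N, f x.1 := by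
  refine Finset.sum_bij' (fun D _ => (D.1, N /ₘ D.1))
    (fun x hx => ⟨x.1, (mem_antidiag.1 hx).1⟩) ?_ ?_ ?_ ?_ ?_
  · rintro ⟨D, hD⟩ h
    obtain ⟨E, rfl⟩ := (mem_monicDivs hN).1 h
    dsimp only at hN ⊢
    rw [mul_divByMonic_cancel_left _ hD]
    simp [hD, hD.of_mul_monic_left hN]
  · rintro ⟨a, b⟩ h
    rw [mem_monicDivs hN]
    exact ⟨b, (mem_antidiag.1 h).2.2.symm⟩
  · intros; rfl
  · rintro ⟨a, b⟩ h
    obtain ⟨ha, hb, rfl⟩ := mem_antidiag.1 h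
    dsimp only at ha ⊢
    rw [mul_divByMonic_cancel_left _ ha]
  · intros; rfl

open scoped Classical in
/-- The sum over all tuples of divisors of `N` of a product factorises. -/
lemma hasSum_prod_divisors {R : Type*} [CommSemiring R] [TopologicalSpace R] {k : ℕ} {N : F[X]}
    (hN : N.Monic) (u : Fin k → F[X] → R) :
    HasSum (fun H : Fin k → {D : F[X] // D.Monic} =>
      ∏ i, if (H i).1 ∣ N then u i (H i).1 else 0) (∏ i, ∑ x ∈ antidiag F N, u i x.1) := by
  have h : ∏ i, ∑ x ∈ antidiag F N, u i x.1 =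
      ∑ H ∈ Fintype.piFinset fun _ : Fin k => monicDivs N,
        ∏ i, if (H i).1 ∣ N then u i (H i).1 else 0 := by
    rw [← Finset.prod_univ_sum (fun _ : Fin k => monicDivs N)
      (fun i D => if D.1 ∣ N then u i D.1 else 0)]
    refine Finset.prod_congr rfl fun i _ => ?_
    rw [← sum_monicDivs hN (u i)]
    exact Finset.sum_congr rfl fun D hD => (if_pos ((mem_monicDivs hN).1 hD)).symm
  rw [h]
  refine hasSum_sum_of_ne_finset_zero fun H hH => ?_
  obtain ⟨i, hi⟩ : ∃ i, ¬ (H i).1 ∣ N := by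
    simpa [Fintype.mem_piFinset, mem_monicDivs hN] using hH
  exact Finset.prod_eq_zero (Finset.mem_univ i) (if_neg hi)

omit [DecidableEq F] in
lemma anorm_mul_s2 {A B : F[X]} (hA : A.Monic) (hB : B.Monic) :
    anorm F (A * B) = anorm F A * anorm F B := by
  rw [anorm, hA.natDegree_mul hB, pow_add, anorm, anorm]

omit [DecidableEq F] in
lemma anorm_ne_zero (A : F[X]) : anorm F A ≠ 0 :=
  pow_ne_zero _ Fintype.card_ne_zero

omit [Fintype F] in
lemma monic_lcm {k : ℕ} (H : Fin k → F[X]) (hH : ∀ i, (H i).Monic) :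
    (Finset.lcm Finset.univ H).Monic := by
  rw [← Finset.normalize_lcm]
  refine monic_normalize fun h0 => ?_
  obtain ⟨i, -, hi⟩ := Finset.lcm_eq_zero_iff.1 h0
  exact (hH i).ne_zero hi

omit [Fintype F] in
lemma monic_gcd {k : ℕ} (hk : 1 ≤ k) (G : Fin k → F[X]) (hG : ∀ i, (G i).Monic) :
    (Finset.gcd Finset.univ G).Monic := by
  rw [← Finset.normalize_gcd]
  refine monic_normalize fun h0 => ?_
  exact (hG ⟨0, hk⟩).ne_zero (Finset.gcd_eq_zero_iff.1 h0 _ (Finset.mem_univ _))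

open scoped Classical in
/-- The terms `(f(N) / |N|^k) ∏ᵢ η(Gᵢ,Hᵢ)`, with `f = μ ∗ g`, of the double series over monic `N`
and tuples `H` of monic divisors of `N`, extended by zero to all tuples of monic polynomials. -/
noncomputable def doubleTerm (g : F[X] → ℂ) {k : ℕ} (G : Fin k → F[X])
    (z : {N : F[X] // N.Monic} × (Fin k → {D : F[X] // D.Monic})) : ℂ :=
  muConv1 F g z.1.1 / (anorm F z.1.1 : ℂ) ^ k *
    ∏ i, if (z.2 i).1 ∣ z.1.1 then eta p F (G i) (z.2 i).1 else 0

/-- Absolute convergence: by `sum_norm_eta_le` the row of norms indexed by `N` sums to at most a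
constant times the `N`-th term of the series assumed to converge. -/
lemma summable_norm_doubleTerm {k : ℕ} (g : F[X] → ℂ)
    (hg : Summable (fun G : {G : F[X] // G.Monic} =>
      (2 : ℝ) ^ (k * omega F G.1) * ‖muConv1 F g G.1‖ / (anorm F G.1 : ℝ) ^ k))
    (G : Fin k → F[X]) (hG : ∀ i, (G i).Monic) :
    Summable fun z => ‖doubleTerm p g G z‖ := by
  classical
  have hrow : ∀ N : {N : F[X] // N.Monic}, HasSum (fun H => ‖doubleTerm p g G (N, H)‖)
      (‖muConv1 F g N.1‖ / (anorm F N.1 : ℝ) ^ k *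
        ∏ i, ∑ x ∈ antidiag F N.1, ‖eta p F (G i) x.1‖) := fun N => by
    have h := (hasSum_prod_divisors N.2 fun i D => ‖eta p F (G i) D‖).mul_left
      (‖muConv1 F g N.1‖ / (anorm F N.1 : ℝ) ^ k)
    refine h.congr_fun fun H => ?_
    rw [doubleTerm, norm_mul, norm_div, norm_pow, Complex.norm_natCast, norm_prod]
    congr 1
    refine Finset.prod_congr rfl fun i _ => ?_
    split_ifs <;> simp
  rw [summable_prod_of_nonneg fun z => norm_nonneg _]
  refine ⟨fun N => (hrow N).summable, ?_⟩
  simp_rw [(hrow _).tsum_eq]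
  refine Summable.of_nonneg_of_le (fun N => by positivity) (fun N => ?_)
    (hg.mul_right (∏ i, ∑ x ∈ antidiag F (G i), (anorm F x.1 : ℝ)))
  calc ‖muConv1 F g N.1‖ / (anorm F N.1 : ℝ) ^ k *
        ∏ i, ∑ x ∈ antidiag F N.1, ‖eta p F (G i) x.1‖
      ≤ ‖muConv1 F g N.1‖ / (anorm F N.1 : ℝ) ^ k *
        ∏ i, 2 ^ omega F N.1 * ∑ x ∈ antidiag F (G i), (anorm F x.1 : ℝ) := by
        gcongr with i
        exact sum_norm_eta_le p (hG i) N.2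
    _ = _ := by
        rw [Finset.prod_mul_distrib, Finset.prod_const, Finset.card_univ, Fintype.card_fin,
          mul_comm k, pow_mul]
        ring

/-- Summation over the tuples `H`, by the orthogonality relation `sum_eta`. -/
lemma hasSum_doubleTerm_row {k : ℕ} (g : F[X] → ℂ) (G : Fin k → F[X])
    (N : {N : F[X] // N.Monic}) [Decidable (N.1 ∣ Finset.gcd Finset.univ G)] :
    HasSum (fun H => doubleTerm p g G (N, H))
      (if N.1 ∣ Finset.gcd Finset.univ G then muConv1 F g N.1 else 0) := by
  classical
  have h := (hasSum_prod_divisors N.2 fun i D => eta p F (G i) D).mul_left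
      (muConv1 F g N.1 / (anorm F N.1 : ℂ) ^ k)
  simp only [fun i => sum_eta p (G i) N.2] at h
  refine (congrArg (HasSum _) ?_).mp h
  split_ifs with hN
  · rw [Finset.dvd_gcd_iff] at hN
    simp only [hN _ (Finset.mem_univ _), if_true, Finset.prod_const, Finset.card_univ,
      Fintype.card_fin]
    have := anorm_ne_zero N.1
    field_simp
  · simp only [Finset.dvd_gcd_iff, not_forall] at hN
    obtain ⟨i, hi, hNi⟩ := hN
    rw [Finset.prod_eq_zero hi (if_neg hNi), mul_zero]

/-- Summation over `N`: only the multiples `M * Q` of `Q = [H₁,…,H_k]` contribute. -/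
lemma tsum_doubleTerm_column {k : ℕ} (g : F[X] → ℂ) (G : Fin k → F[X])
    (H : Fin k → {D : F[X] // D.Monic}) :
    ∑' N, doubleTerm p g G (N, H) =
      ((1 / (anorm F (Finset.lcm Finset.univ fun i => (H i).1) : ℂ) ^ k) *
          ∑' M : {M : F[X] // M.Monic},
            muConv1 F g (M.1 * Finset.lcm Finset.univ fun i => (H i).1) /
              (anorm F M.1 : ℂ) ^ k) *
        ∏ i, eta p F (G i) (H i).1 := by
  classical
  set Q := Finset.lcm Finset.univ fun i => (H i).1 with hQdef
  have hQ : Q.Monic := monic_lcm _ fun i => (H i).2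
  have hdvd : ∀ i, (H i).1 ∣ Q := fun i => Finset.dvd_lcm (Finset.mem_univ i)
  let φ : {M : F[X] // M.Monic} → {N : F[X] // N.Monic} := fun M => ⟨M.1 * Q, M.2.mul hQ⟩
  have hφ : Function.Injective φ := fun M M' h =>
    Subtype.ext (mul_right_cancel₀ hQ.ne_zero (congrArg Subtype.val h))
  have hsupp : Function.support (fun N => doubleTerm p g G (N, H)) ⊆ Set.range φ := by
    intro N hN
    have hQN : Q ∣ N.1 := by
      refine Finset.lcm_dvd_iff.2 fun i hi => ?_
      by_contra hi'
      refine hN ?_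
      simp only [doubleTerm]
      rw [Finset.prod_eq_zero hi (if_neg hi'), mul_zero]
    obtain ⟨M, hM⟩ := hQN
    exact ⟨⟨M, hQ.of_mul_monic_left (hM ▸ N.2)⟩, Subtype.ext ((mul_comm _ _).trans hM.symm)⟩
  rw [← hφ.tsum_eq hsupp, ← tsum_mul_left, ← tsum_mul_right]
  refine tsum_congr fun M => ?_
  simp only [doubleTerm, φ, anorm_mul_s2 M.2 hQ, (hdvd _).mul_left M.1, if_true]
  have h1 := anorm_ne_zero M.1
  have h2 := anorm_ne_zero Q
  push_cast
  rw [mul_pow]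
  field_simp

end DoubleSeries

/-- Ramanujan expansion of `g((G₁,…,G_k))` through the polynomial Ramanujan sums `η`:
for `g` with `Σ_G 2^(kω(G)) |(μ∗g)(G)|/|G|^k < ∞`, the family
`C_{H₁,…,H_k} η(G₁,H₁)⋯η(G_k,H_k)` is absolutely summable with sum `g((G₁,…,G_k))`,
where `C_{H₁,…,H_k} = (1/|Q|^k) Σ_M (μ∗g)(MQ)/|M|^k` and `Q = [H₁,…,H_k]`. -/
theorem ramanujan_expansion_gcd_eta (k : ℕ) (hk : 1 ≤ k)
    (g : Polynomial F → ℂ)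
    (hg : Summable (fun G : {G : Polynomial F // G.Monic} =>
      (2 : ℝ) ^ (k * omega F G.1) * ‖muConv1 F g G.1‖ / (anorm F G.1 : ℝ) ^ k))
    (G : Fin k → Polynomial F) (hG : ∀ i, (G i).Monic) :
    Summable (fun H : {H : Fin k → Polynomial F // ∀ i, (H i).Monic} =>
      ‖((1 / (anorm F (Finset.lcm Finset.univ H.1) : ℂ) ^ k) *
          ∑' M : {M : Polynomial F // M.Monic},
            muConv1 F g (M.1 * Finset.lcm Finset.univ H.1) / (anorm F M.1 : ℂ) ^ k) *
        ∏ i, eta p F (G i) (H.1 i)‖) ∧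
    HasSum (fun H : {H : Fin k → Polynomial F // ∀ i, (H i).Monic} =>
      ((1 / (anorm F (Finset.lcm Finset.univ H.1) : ℂ) ^ k) *
          ∑' M : {M : Polynomial F // M.Monic},
            muConv1 F g (M.1 * Finset.lcm Finset.univ H.1) / (anorm F M.1 : ℂ) ^ k) *
        ∏ i, eta p F (G i) (H.1 i))
      (g (Finset.gcd Finset.univ G)) := by
  classical
  have hsum := summable_norm_doubleTerm p g hg G hG
  have hdouble := hsum.of_norm.hasSum
  have hrows := hdouble.prod_fiberwise fun N => hasSum_doubleTerm_row p g G N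
  have hgcd := monic_gcd hk G hG
  have hdiag : HasSum (fun N : {N : F[X] // N.Monic} =>
      if N.1 ∣ Finset.gcd Finset.univ G then muConv1 F g N.1 else 0)
      (g (Finset.gcd Finset.univ G)) := by
    have h : g (Finset.gcd Finset.univ G) = ∑ N ∈ monicDivs (Finset.gcd Finset.univ G),
        if N.1 ∣ Finset.gcd Finset.univ G then muConv1 F g N.1 else 0 := by
      rw [← sum_muConv1 g hgcd, ← sum_monicDivs hgcd]
      exact Finset.sum_congr rfl fun N hN => (if_pos ((mem_monicDivs hgcd).1 hN)).symm
    rw [h]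
    exact hasSum_sum_of_ne_finset_zero fun N hN => if_neg (by rwa [← mem_monicDivs hgcd])
  rw [hrows.unique hdiag] at hdouble
  have hswap := (Equiv.prodComm _ _).hasSum_iff.2 hdouble
  have hcols := hswap.prod_fiberwise fun H => (hswap.summable.prod_factor H).hasSum
  have hmain := Equiv.subtypePiEquivPi.hasSum_iff.2 hcols
  have hfinal := hmain.congr_fun fun H =>
    (tsum_doubleTerm_column p g G (Equiv.subtypePiEquivPi H)).symm
  exact ⟨hfinal.summable.norm, hfinal⟩
end
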